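/- arXiv:1606.03651 — 2 statements merged into one kernel-verified Lean document; each statement's English description precedes it below -/
import Mathlib

section
/- Let X be a real-valued random variable with unbounded distribution F and Y a nonnegative random variable with distribution G, neither degenerate at zero, with X and Y independent, and let H be the distribution of XY. Suppose Assumption 2 holds: Ḡ(bx)=o(H̄(x)) as x→∞ for every constant b>0. If F belongs to the class S(γ) for some γ≥0, then H belongs to S(γ/β_G), where β_G=sup{y:G(y)<1}∈(0,∞] and γ/β_G is understood as 0 when β_G=∞. -/
open MeasureTheory ProbabilityTheory Filter Set Asymptotics

noncomputable section

/-- The tail (survival) function `x ↦ P(Z > x)` of a random variable `Z`. -/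
def rvTail {Ω : Type*} [MeasureSpace Ω] (Z : Ω → ℝ) (x : ℝ) : ℝ :=
  (ℙ {ω | x < Z ω}).toReal

/-- The cumulative distribution function `x ↦ P(Z ≤ x)` of a random variable `Z`. -/
def rvCdf {Ω : Type*} [MeasureSpace Ω] (Z : Ω → ℝ) (x : ℝ) : ℝ :=
  (ℙ {ω | Z ω ≤ x}).toReal

/-- The left limit of the cdf, `G(y-) = P(Z < y)`. -/
def rvCdfLeft {Ω : Type*} [MeasureSpace Ω] (Z : Ω → ℝ) (y : ℝ) : ℝ :=
  (ℙ {ω | Z ω < y}).toReal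

/-- The distribution of `Z` is unbounded (above): its tail is positive for every `x > 0`. -/
def UnboundedDist {Ω : Type*} [MeasureSpace Ω] (Z : Ω → ℝ) : Prop :=
  ∀ x > 0, 0 < rvTail Z x

/-- The support `D_Z = {y : P(Z ∈ (y - δ, y + δ)) > 0 for all δ > 0}` of the
distribution of `Z`. -/
def distSupport {Ω : Type*} [MeasureSpace Ω] (Z : Ω → ℝ) : Set ℝ :=
  {y | ∀ δ > 0, 0 < ℙ {ω | Z ω ∈ Ioo (y - δ) (y + δ)}}

/-- The distribution of `Z` belongs to the class `L(γ)`: it is unbounded above and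
`P(Z > x - t) ~ e^{γ t} P(Z > x)` as `x → ∞`, for every `t > 0`. -/
def MemLGamma {Ω : Type*} [MeasureSpace Ω] (Z : Ω → ℝ) (γ : ℝ) : Prop :=
  UnboundedDist Z ∧
    ∀ t > 0, (fun x => rvTail Z (x - t)) ~[atTop] (fun x => Real.exp (γ * t) * rvTail Z x)

/-- The tail of the two-fold convolution of the distribution of `Z` with itself. -/
def convSqTail {Ω : Type*} [MeasureSpace Ω] (Z : Ω → ℝ) (x : ℝ) : ℝ :=
  (((Measure.map Z ℙ).conv (Measure.map Z ℙ)) (Ioi x)).toReal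

/-- The distribution of `Z` belongs to the class `S(γ)`: it belongs to `L(γ)`, the
exponential moment `c = ∫ e^{γ y} dV(y)` is finite, and the tail of the two-fold
convolution satisfies `V̄*²(x) ~ 2 c V̄(x)` as `x → ∞`. -/
def MemSGamma {Ω : Type*} [MeasureSpace Ω] (Z : Ω → ℝ) (γ : ℝ) : Prop :=
  MemLGamma Z γ ∧
    Integrable (fun y => Real.exp (γ * y)) (Measure.map Z ℙ) ∧
    (fun x => convSqTail Z x) ~[atTop]
      (fun x => 2 * (∫ y, Real.exp (γ * y) ∂(Measure.map Z ℙ)) * rvTail Z x)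

open Classical in
/-- `γ / β_G`, where `β_G = sup {y : G(y) < 1}` is the right endpoint of the distribution
of `Z`, with the convention that `γ / β_G = 0` when `β_G = ∞`.
(Note that `G(y) < 1 ↔ P(Z > y) > 0`.) -/
def gammaOverBeta {Ω : Type*} [MeasureSpace Ω] (Z : Ω → ℝ) (γ : ℝ) : ℝ :=
  if BddAbove {y : ℝ | 0 < rvTail Z y} then γ / sSup {y : ℝ | 0 < rvTail Z y} else 0

/-- Assumption 2: `Ḡ(b x) = o(H̄(x))` as `x → ∞` for every constant `b > 0`, where `G` is
the distribution of `Y` and `H` is the distribution of the product `X Y`. -/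
def Assumption2 {Ω : Type*} [MeasureSpace Ω] (X Y : Ω → ℝ) : Prop :=
  ∀ b > 0, (fun x => rvTail Y (b * x)) =o[atTop] fun x => rvTail (fun ω => X ω * Y ω) x

/-- Assumption 1: `K x y` is the conditional probability `P(X > x | Y = y)`, namely for
`y` in the support of `Y` it is the limit of `P(X > x | Y ∈ (y - δ, y + δ])` as `δ → 0+`,
and for `y` outside the support it is the unconditional probability `P(X > x)` (and then
`h y = 1`); `h : [0,∞) → (0,∞)` is a measurable function such that
`P(X > x | Y = y) ~ h(y) P(X > x)` as `x → ∞`, uniformly for `y ≥ 0`. -/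
def Assumption1 {Ω : Type*} [MeasureSpace Ω] (X Y : Ω → ℝ) (h : ℝ → ℝ) (K : ℝ → ℝ → ℝ) :
    Prop :=
  Measurable h ∧ (∀ y, 0 ≤ y → 0 < h y) ∧
    (∀ y, y ∉ distSupport Y → h y = 1 ∧ ∀ x, K x y = rvTail X x) ∧
    (∀ y ∈ distSupport Y, ∀ x : ℝ,
      Tendsto
        (fun δ : ℝ => (ℙ {ω | x < X ω ∧ Y ω ∈ Ioc (y - δ) (y + δ)}).toReal /
          (ℙ {ω | Y ω ∈ Ioc (y - δ) (y + δ)}).toReal)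
        (nhdsWithin 0 (Ioi 0)) (nhds (K x y))) ∧
    ∀ ε > 0, ∀ᶠ x in atTop, ∀ y, 0 ≤ y → |K x y / (h y * rvTail X x) - 1| < ε

/-- `(X, Y)` follows a Farlie–Gumbel–Morgenstern (FGM) distribution with parameter
`θ ∈ [-1, 1]`: `P(X > x, Y > y) = F̄(x) Ḡ(y) (1 + θ F(x) G(y))` for all `x` in the
support of `X` and `y` in the support of `Y`. -/
def FGM {Ω : Type*} [MeasureSpace Ω] (X Y : Ω → ℝ) (θ : ℝ) : Prop :=
  θ ∈ Icc (-1 : ℝ) 1 ∧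
    ∀ x ∈ distSupport X, ∀ y ∈ distSupport Y,
      (ℙ {ω | x < X ω ∧ y < Y ω}).toReal =
        rvTail X x * rvTail Y y * (1 + θ * rvCdf X x * rvCdf Y y)

/-- `(X, Y)` follows a bivariate Sarmanov distribution with kernels `φ₁, φ₂` and
parameter `θ`: the joint law has density `1 + θ φ₁(x) φ₂(y)` with respect to the product
of the marginal laws, where `φ₁, φ₂` are measurable, `E φ₁(X) = E φ₂(Y) = 0` and
`1 + θ φ₁(x) φ₂(y) ≥ 0`. -/
def Sarmanov {Ω : Type*} [MeasureSpace Ω] (X Y : Ω → ℝ) (φ₁ φ₂ : ℝ → ℝ) (θ : ℝ) : Prop :=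
  Measurable φ₁ ∧ Measurable φ₂ ∧
    Integrable (fun ω => φ₁ (X ω)) ℙ ∧ Integrable (fun ω => φ₂ (Y ω)) ℙ ∧
    (∫ ω, φ₁ (X ω)) = 0 ∧ (∫ ω, φ₂ (Y ω)) = 0 ∧
    (∀ x y : ℝ, 0 ≤ y → 0 ≤ 1 + θ * φ₁ x * φ₂ y) ∧
    Measure.map (fun ω => (X ω, Y ω)) ℙ =
      ((Measure.map X ℙ).prod (Measure.map Y ℙ)).withDensity
        (fun p => ENNReal.ofReal (1 + θ * φ₁ p.1 * φ₂ p.2))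

/-- The condition `ψ(y) = lim_{δ → 0+} (∫_{y-δ}^{y+δ} φ₂(v) G(dv)) / (G(y+δ) - G(y-δ))`
for all `y` in the support of `Y`. -/
def SarmanovPsi {Ω : Type*} [MeasureSpace Ω] (Y : Ω → ℝ) (φ₂ ψ : ℝ → ℝ) : Prop :=
  ∀ y ∈ distSupport Y,
    Tendsto
      (fun δ : ℝ => (∫ v in Ioc (y - δ) (y + δ), φ₂ v ∂(Measure.map Y ℙ)) /
        (rvCdf Y (y + δ) - rvCdf Y (y - δ)))
      (nhdsWithin 0 (Ioi 0)) (nhds (ψ y))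


open Topology ENNReal

/-- tail of a measure -/
def tl (m : Measure ℝ) (x : ℝ) : ℝ := m.real (Ioi x)

/-- both-large part of the convolution tail -/
def ph (m : Measure ℝ) (K x : ℝ) : ℝ :=
  (m.prod m).real {p | x < p.1 + p.2 ∧ K < p.1 ∧ K < p.2}

/-- convolution tail -/
def cv (m : Measure ℝ) (x : ℝ) : ℝ := (m.prod m).real {p | x < p.1 + p.2}

/-- product tail -/
def pt (μ ν : Measure ℝ) (x : ℝ) : ℝ := (μ.prod ν).real {p | x < p.1 * p.2}

lemma meas_sum (x : ℝ) : MeasurableSet {p : ℝ × ℝ | x < p.1 + p.2} :=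
  measurableSet_lt (by fun_prop) (by fun_prop)

lemma meas_mul (x : ℝ) : MeasurableSet {p : ℝ × ℝ | x < p.1 * p.2} :=
  measurableSet_lt (by fun_prop) (by fun_prop)

lemma tl_nonneg (m : Measure ℝ) (x : ℝ) : 0 ≤ tl m x := measureReal_nonneg

lemma tl_anti (m : Measure ℝ) [IsProbabilityMeasure m] : Antitone (tl m) := by
  intro a b h
  exact measureReal_mono (Ioi_subset_Ioi h)

lemma tl_tendsto (m : Measure ℝ) [IsProbabilityMeasure m] :
    Tendsto (tl m) atTop (𝓝 0) := by
  have h1 : ∀ x, tl m x = 1 - cdf m x := by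
    intro x
    rw [cdf_eq_real, tl, ← probReal_compl_eq_one_sub measurableSet_Iic, compl_Iic]
  have := (tendsto_cdf_atTop m).const_sub 1
  simp only [sub_self] at this
  exact this.congr (fun x => (h1 x).symm)

lemma fub (μ ν : Measure ℝ) [IsProbabilityMeasure μ] [IsProbabilityMeasure ν]
    {A B : Set (ℝ × ℝ)} (hA : MeasurableSet A) (hB : MeasurableSet B) {c : ℝ} (hc : 0 ≤ c)
    (h : ∀ᵐ y ∂ν, μ.real {a | (a, y) ∈ A} ≤ c * μ.real {a | (a, y) ∈ B}) :
    (μ.prod ν).real A ≤ c * (μ.prod ν).real B := by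
  have key : (μ.prod ν) A ≤ ENNReal.ofReal c * (μ.prod ν) B := by
    rw [Measure.prod_apply_symm hA, Measure.prod_apply_symm hB,
      ← lintegral_const_mul _ (measurable_measure_prodMk_right hB)]
    refine lintegral_mono_ae ?_
    filter_upwards [h] with y hy
    have := ENNReal.ofReal_le_ofReal hy
    rw [ENNReal.ofReal_mul hc, ofReal_measureReal, ofReal_measureReal] at this
    exact this
  have := ENNReal.toReal_mono (by finiteness) key
  rwa [ENNReal.toReal_mul, ENNReal.toReal_ofReal hc] at this

lemma mid_swap (μ ν : Measure ℝ) [IsProbabilityMeasure μ] [IsProbabilityMeasure ν] :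
    MeasurePreserving (fun q : (ℝ × ℝ) × (ℝ × ℝ) => ((q.1.1, q.2.1), (q.1.2, q.2.2)))
      ((μ.prod μ).prod (ν.prod ν)) ((μ.prod ν).prod (μ.prod ν)) := by
  have i1 := measurePreserving_prodAssoc μ μ (ν.prod ν)
  have j1 := (measurePreserving_prodAssoc μ ν ν).symm
  have j2 := (Measure.measurePreserving_swap (μ := μ) (ν := ν)).prod (MeasurePreserving.id ν)
  have j3 := measurePreserving_prodAssoc ν μ ν
  have j := (MeasurePreserving.id μ).prod (j3.comp (j2.comp j1))
  have i3 := (measurePreserving_prodAssoc μ ν (μ.prod ν)).symm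
  exact i3.comp (j.comp i1)

lemma prod_H (μ ν : Measure ℝ) [IsProbabilityMeasure μ] [IsProbabilityMeasure ν]
    {A : Set (ℝ × ℝ)} (hA : MeasurableSet A) :
    (((μ.prod ν).map (fun p => p.1 * p.2)).prod ((μ.prod ν).map (fun p => p.1 * p.2))) A =
    ((μ.prod μ).prod (ν.prod ν)) {q | (q.1.1 * q.2.1, q.1.2 * q.2.2) ∈ A} := by
  rw [Measure.map_prod_map _ _ (by fun_prop) (by fun_prop), ← (mid_swap μ ν).map_eq,
    Measure.map_map (by fun_prop) (by fun_prop), Measure.map_apply (by fun_prop) hA]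
  rfl

lemma tl_H (μ ν : Measure ℝ) (x : ℝ) :
    tl ((μ.prod ν).map (fun p => p.1 * p.2)) x = pt μ ν x := by
  rw [tl, map_measureReal_apply (by fun_prop) measurableSet_Ioi]; rfl

lemma pt_lower (μ ν : Measure ℝ) [IsProbabilityMeasure μ] [IsProbabilityMeasure ν]
    {x b : ℝ} (hx : 0 < x) (hb : 0 < b) : tl ν b * tl μ (x / b) ≤ pt μ ν x := by
  rw [mul_comm]
  unfold tl pt
  rw [← measureReal_prod_prod]
  refine measureReal_mono ?_
  rintro ⟨a, y⟩ ⟨h1, h2⟩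
  simp only [mem_Ioi, mem_ofPred_eq] at *
  have h3 : 0 < x / b := by positivity
  calc x = x / b * b := by field_simp
    _ < a * y := by nlinarith

lemma pt_le_one (μ ν : Measure ℝ) [IsProbabilityMeasure μ] [IsProbabilityMeasure ν] (x : ℝ) :
    pt μ ν x ≤ 1 := measureReal_le_one

/-- the hypothesis of long-tailedness, at the level of measures -/
def LTail (m : Measure ℝ) (γ : ℝ) : Prop :=
  (∀ x, 0 < tl m x) ∧ ∀ t, Tendsto (fun x => tl m (x - t) / tl m x) atTop (𝓝 (Real.exp (γ * t)))

lemma LTail_of_pos {m : Measure ℝ} {γ : ℝ} (h0 : ∀ x, 0 < tl m x)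
    (h : ∀ t > 0, Tendsto (fun x => tl m (x - t) / tl m x) atTop (𝓝 (Real.exp (γ * t)))) :
    LTail m γ := by
  refine ⟨h0, fun t => ?_⟩
  rcases lt_trichotomy t 0 with ht | rfl | ht
  · have h1 := h (-t) (by linarith)
    have h2 := (h1.comp (tendsto_atTop_add_const_right atTop (-t) tendsto_id)).inv₀
      (Real.exp_pos _).ne'
    rw [← Real.exp_neg] at h2
    have e : -(γ * -t) = γ * t := by ring
    rw [e] at h2
    refine h2.congr (fun x => ?_)
    simp only [Function.comp, id, inv_div]
    (congr 2; ring)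
  · simp only [sub_zero, mul_zero, Real.exp_zero]
    refine tendsto_const_nhds.congr (fun x => ?_)
    rw [div_self (h0 x).ne']
  · exact h t ht

/-- truncated convolution part -/
def tr (m : Measure ℝ) (K x : ℝ) : ℝ := ∫ z in Iic K, tl m (x - z) ∂m

lemma tr_eq (m : Measure ℝ) [IsProbabilityMeasure m] (K x : ℝ) :
    (m.prod m).real {p | x < p.1 + p.2 ∧ p.1 ≤ K} = tr m K x := by
  have hm : MeasurableSet {p : ℝ × ℝ | x < p.1 + p.2 ∧ p.1 ≤ K} :=
    (meas_sum x).inter (measurableSet_le measurable_fst measurable_const)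
  rw [Measure.real, Measure.prod_apply hm, tr, ← integral_indicator measurableSet_Iic,
    ← integral_toReal (measurable_measure_prodMk_left hm).aemeasurable
      (Eventually.of_forall (fun _ => measure_lt_top _ _))]
  congr 1
  ext z
  by_cases hz : z ∈ Iic K
  · rw [indicator_of_mem hz, tl, Measure.real]
    congr 2
    ext w
    simp only [mem_preimage, mem_ofPred_eq, mem_Ioi]
    simp only [mem_Iic] at hz
    constructor
    · rintro ⟨h1, -⟩; linarith
    · intro h; exact ⟨by linarith, hz⟩
  · rw [indicator_of_notMem hz]
    have : Prod.mk z ⁻¹' {p : ℝ × ℝ | x < p.1 + p.2 ∧ p.1 ≤ K} = ∅ := by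
      ext w
      simp only [mem_preimage, mem_ofPred_eq, mem_empty_iff_false, iff_false]
      rintro ⟨-, h⟩
      exact hz h
    rw [this]; simp

lemma tr_eq' (m : Measure ℝ) [IsProbabilityMeasure m] (K x : ℝ) :
    (m.prod m).real {p | x < p.1 + p.2 ∧ p.2 ≤ K} = tr m K x := by
  rw [← tr_eq, Measure.real, Measure.real]
  have hm : MeasurableSet {p : ℝ × ℝ | x < p.1 + p.2 ∧ p.1 ≤ K} :=
    (meas_sum x).inter (measurableSet_le measurable_fst measurable_const)
  rw [← (Measure.measurePreserving_swap (μ := m) (ν := m)).measure_preimage hm.nullMeasurableSet]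
  congr 2
  ext ⟨a, b⟩
  simp [add_comm]

lemma cv_decomp (m : Measure ℝ) [IsProbabilityMeasure m] {K x : ℝ} (hx : 2 * K < x) :
    cv m x = 2 * tr m K x + ph m K x := by
  have hm1 : MeasurableSet {p : ℝ × ℝ | p.1 ≤ K} := measurableSet_le (by fun_prop) (by fun_prop)
  have hm2 : MeasurableSet {p : ℝ × ℝ | p.2 ≤ K} := measurableSet_le (by fun_prop) (by fun_prop)
  have e1 := measureReal_inter_add_sdiff (μ := m.prod m) (s := {p | x < p.1 + p.2}) hm1
  have e2 := measureReal_inter_add_sdiff (μ := m.prod m)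
    (s := {p : ℝ × ℝ | x < p.1 + p.2} \ {p : ℝ × ℝ | p.1 ≤ K}) hm2
  have s1 : {p : ℝ × ℝ | x < p.1 + p.2} ∩ {p : ℝ × ℝ | p.1 ≤ K} =
    {p | x < p.1 + p.2 ∧ p.1 ≤ K} := rfl
  have s2 : ({p : ℝ × ℝ | x < p.1 + p.2} \ {p : ℝ × ℝ | p.1 ≤ K}) ∩ {p : ℝ × ℝ | p.2 ≤ K} =
    {p | x < p.1 + p.2 ∧ p.2 ≤ K} := by
    ext p
    simp only [mem_inter_iff, Set.mem_sdiff, mem_ofPred_eq, not_le]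
    constructor
    · rintro ⟨⟨h1, h2⟩, h3⟩; exact ⟨h1, h3⟩
    · rintro ⟨h1, h3⟩; exact ⟨⟨h1, by linarith⟩, h3⟩
  have s3 : ({p : ℝ × ℝ | x < p.1 + p.2} \ {p : ℝ × ℝ | p.1 ≤ K}) \ {p : ℝ × ℝ | p.2 ≤ K} =
    {p | x < p.1 + p.2 ∧ K < p.1 ∧ K < p.2} := by
    ext p
    simp only [Set.mem_sdiff, mem_ofPred_eq, not_le, and_assoc]
  rw [s1, tr_eq] at e1
  rw [s2, s3, tr_eq'] at e2
  unfold cv ph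
  linarith

lemma tr_tendsto {m : Measure ℝ} [IsProbabilityMeasure m] {γ : ℝ} (h : LTail m γ) (K : ℝ) :
    Tendsto (fun x => tr m K x / tl m x) atTop (𝓝 (∫ z in Iic K, Real.exp (γ * z) ∂m)) := by
  have e : ∀ x, tr m K x / tl m x = ∫ z in Iic K, tl m (x - z) / tl m x ∂m := by
    intro x; rw [tr, integral_div]
  simp_rw [e]
  refine tendsto_integral_filter_of_dominated_convergence (fun _ => Real.exp (γ * K) + 1) ?_ ?_ ?_ ?_
  · refine Eventually.of_forall (fun x => ?_)
    refine Measurable.aestronglyMeasurable ?_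
    refine Measurable.div_const ?_ _
    exact (tl_anti m).measurable.comp (by fun_prop)
  · have := (h.2 K).eventually_le_const (show Real.exp (γ * K) < Real.exp (γ * K) + 1 by linarith)
    filter_upwards [this] with x hx
    refine (ae_restrict_iff' measurableSet_Iic).2 (Eventually.of_forall (fun z hz => ?_))
    rw [Real.norm_of_nonneg (div_nonneg (tl_nonneg _ _) (tl_nonneg _ _))]
    refine le_trans ?_ hx
    simp only [mem_Iic] at hz
    exact div_le_div_of_nonneg_right (tl_anti m (by linarith)) (tl_nonneg _ _)
  · exact integrable_const _
  · exact Eventually.of_forall (fun z => h.2 z)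

lemma trunc_tendsto {m : Measure ℝ} {γ : ℝ} (hi : Integrable (fun y => Real.exp (γ * y)) m) :
    Tendsto (fun K : ℝ => ∫ z in Iic K, Real.exp (γ * z) ∂m) atTop
      (𝓝 (∫ z, Real.exp (γ * z) ∂m)) :=
  (aecover_Iic tendsto_id).integral_tendsto_of_countably_generated hi

lemma ph_anti (m : Measure ℝ) [IsProbabilityMeasure m] (x : ℝ) {K K' : ℝ} (h : K ≤ K') :
    ph m K' x ≤ ph m K x := by
  refine measureReal_mono ?_
  rintro p ⟨h1, h2, h3⟩
  exact ⟨h1, h.trans_lt h2, h.trans_lt h3⟩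

lemma ph_small {m : Measure ℝ} [IsProbabilityMeasure m] {γ : ℝ} (h : LTail m γ)
    (hi : Integrable (fun y => Real.exp (γ * y)) m)
    (hc : Tendsto (fun x => cv m x / tl m x) atTop (𝓝 (2 * ∫ y, Real.exp (γ * y) ∂m)))
    {ε : ℝ} (hε : 0 < ε) : ∃ M > 0, ∀ᶠ x in atTop, ph m M x ≤ ε * tl m x := by
  have h1 := (trunc_tendsto hi).eventually_const_le
    (show (∫ z, Real.exp (γ * z) ∂m) - ε / 4 < ∫ z, Real.exp (γ * z) ∂m by linarith)
  obtain ⟨M, hM, hM0⟩ := (h1.and (eventually_gt_atTop 0)).exists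
  refine ⟨M, hM0, ?_⟩
  have h2 := hc.sub ((tr_tendsto h M).const_mul 2)
  have h3 := h2.eventually_le_const (show _ < ε by linarith)
  filter_upwards [h3, eventually_gt_atTop (2 * M)] with x hx hx2
  rw [← div_le_iff₀ (h.1 x)]
  rw [cv_decomp m hx2] at hx
  refine le_trans (le_of_eq ?_) hx
  ring

lemma cv_of_ph {m : Measure ℝ} [IsProbabilityMeasure m] {γ : ℝ} (h : LTail m γ)
    (hi : Integrable (fun y => Real.exp (γ * y)) m)
    (hp : ∀ ε > 0, ∃ M, ∀ᶠ x in atTop, ph m M x ≤ ε * tl m x) :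
    Tendsto (fun x => cv m x / tl m x) atTop (𝓝 (2 * ∫ y, Real.exp (γ * y) ∂m)) := by
  rw [Metric.tendsto_nhds]
  intro ε hε
  obtain ⟨M₀, hM₀⟩ := hp (ε / 4) (by linarith)
  have h1 := Metric.tendsto_nhds.1 (trunc_tendsto hi) (ε / 8) (by linarith)
  obtain ⟨M, hM, hM0⟩ := (h1.and (eventually_ge_atTop M₀)).exists
  have h2 := Metric.tendsto_nhds.1 (tr_tendsto h M) (ε / 8) (by linarith)
  filter_upwards [h2, hM₀, eventually_gt_atTop (2 * M)] with x hx hx1 hx2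
  have h3 : ph m M x / tl m x ≤ ε / 4 := by
    rw [div_le_iff₀ (h.1 x)]
    exact (ph_anti m x hM0).trans hx1
  have h4 : 0 ≤ ph m M x / tl m x := div_nonneg measureReal_nonneg (tl_nonneg _ _)
  have h5 : cv m x / tl m x = 2 * (tr m M x / tl m x) + ph m M x / tl m x := by
    rw [cv_decomp m hx2]; ring
  rw [Real.dist_eq, abs_lt] at *
  rw [h5]
  constructor <;> linarith [hM.1, hM.2, hx.1, hx.2]

lemma pt_anti (μ ν : Measure ℝ) [IsProbabilityMeasure μ] [IsProbabilityMeasure ν] :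
    Antitone (pt μ ν) := by
  intro a b h
  refine measureReal_mono ?_
  intro p hp
  exact lt_of_le_of_lt h hp

lemma sec_eq (μ : Measure ℝ) {x b : ℝ} (hb : 0 < b) :
    μ.real {a | (a, b) ∈ {p : ℝ × ℝ | x < p.1 * p.2}} = tl μ (x / b) := by
  rw [tl]
  congr 1
  ext a
  simp only [mem_ofPred_eq, mem_Ioi]
  rw [div_lt_iff₀ hb]

lemma sec_eq' (μ : Measure ℝ) {x b : ℝ} (hb : 0 < b) :
    μ.real {a | x < a * b} = tl μ (x / b) := sec_eq μ hb

lemma Ioc_small (ν : Measure ℝ) [IsProbabilityMeasure ν] {ε y : ℝ} (hε : 0 < ε) (hy : 0 < y) :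
    ∃ a, 0 < a ∧ a ≤ y ∧ ν.real (Ioc 0 a) ≤ ε := by
  have h1 : Tendsto (cdf ν) (𝓝[>] 0) (𝓝 (cdf ν 0)) :=
    ((cdf ν).right_continuous 0).mono_left (nhdsWithin_mono _ Ioi_subset_Ici_self)
  have h2 := h1.eventually_le_const (show cdf ν 0 < cdf ν 0 + ε by linarith)
  have h3 : ∀ᶠ a in 𝓝[>] (0 : ℝ), a ∈ Ioc 0 y := Ioc_mem_nhdsGT hy
  obtain ⟨a, ha, ha2⟩ := (h2.and h3).exists
  refine ⟨a, ha2.1, ha2.2, ?_⟩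
  have : Ioc 0 a = Iic a \ Iic 0 := by
    ext z; simp [and_comm]
  rw [this, measureReal_sdiff (Iic_subset_Iic.2 ha2.1.le) measurableSet_Iic,
    ← cdf_eq_real, ← cdf_eq_real]
  linarith

lemma small_part {μ ν : Measure ℝ} [IsProbabilityMeasure μ] [IsProbabilityMeasure ν] {γ α : ℝ}
    (hμ : LTail μ γ) {y0 : ℝ} (hy0 : 0 < y0) (hy0' : 0 < tl ν y0)
    (hup : (γ = 0 ∧ α = 0) ∨ (0 < γ ∧ ∀ ε > 0, ∃ a > 0, ∃ a' > a, 0 < tl ν a' ∧ γ / a ≤ α + ε))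
    {t : ℝ} (ht : 0 < t) {ε : ℝ} (hε : 0 < ε) :
    ∃ a > 0, Real.exp (γ * (t / a)) ≤ Real.exp (α * t) + ε ∧
      ∀ᶠ x in atTop, tl μ ((x - t) / a) * ν.real (Ioc 0 a) ≤ ε * pt μ ν x := by
  rcases hup with ⟨rfl, rfl⟩ | ⟨hγ, hup⟩
  · obtain ⟨a, ha, hay, hs⟩ := Ioc_small ν (show 0 < ε * tl ν y0 by positivity)
      (show 0 < y0 / 2 by positivity)
    refine ⟨a, ha, by simp [hε.le], ?_⟩
    filter_upwards [eventually_ge_atTop (2 * t)] with x hx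
    have hx0 : 0 < x := by linarith
    have h1 : x / y0 ≤ (x - t) / a := by
      rw [div_le_div_iff₀ hy0 ha]
      nlinarith
    calc tl μ ((x - t) / a) * ν.real (Ioc 0 a) ≤ tl μ (x / y0) * (ε * tl ν y0) :=
          mul_le_mul (tl_anti μ h1) hs measureReal_nonneg (tl_nonneg _ _)
      _ = ε * (tl ν y0 * tl μ (x / y0)) := by ring
      _ ≤ _ := mul_le_mul_of_nonneg_left (pt_lower μ ν hx0 hy0) hε.le
  · have hcont : Tendsto (fun η : ℝ => Real.exp ((α + η) * t)) (𝓝[>] 0)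
        (𝓝 (Real.exp ((α + 0) * t))) := by
      refine Tendsto.mono_left ?_ nhdsWithin_le_nhds
      exact Continuous.tendsto (by fun_prop) 0
    rw [add_zero] at hcont
    have h1 := hcont.eventually_le_const (show _ < Real.exp (α * t) + ε by linarith)
    obtain ⟨η, hη, hη0⟩ := (h1.and self_mem_nhdsWithin).exists
    obtain ⟨a, ha, a', ha', hp, hle⟩ := hup η hη0
    have ha'0 : 0 < a' := ha.trans ha'
    refine ⟨a, ha, ?_, ?_⟩
    · refine le_trans (Real.exp_le_exp.2 ?_) hη
      calc γ * (t / a) = γ / a * t := by ring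
        _ ≤ _ := mul_le_mul_of_nonneg_right hle ht.le
    · have hs : Tendsto (fun s : ℝ => Real.exp (γ * (-s))) atTop (𝓝 0) := by
        refine Real.tendsto_exp_atBot.comp ?_
        exact (tendsto_neg_atTop_atBot).const_mul_atBot hγ
      obtain ⟨s, hs⟩ := (hs.eventually_lt_const (show 0 < ε * tl ν a' by positivity)).exists
      have h2 := ((hμ.2 (-s)).comp (tendsto_id.atTop_div_const ha'0)).eventually_le_const hs
      have hd : 0 < 1 / a - 1 / a' := by
        have := one_div_lt_one_div_of_lt ha ha'
        linarith
      have h3 := (tendsto_id.atTop_mul_const hd).eventually_ge_atTop (s + t / a)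
      filter_upwards [h2, h3, eventually_gt_atTop 0] with x hx hx3 hx0
      simp only [Function.comp, id, sub_neg_eq_add] at hx hx3
      rw [div_le_iff₀ (hμ.1 _)] at hx
      have h4 : x / a' + s ≤ (x - t) / a := by
        have : (x - t) / a - x / a' = x * (1 / a - 1 / a') - t / a := by ring
        linarith
      calc tl μ ((x - t) / a) * ν.real (Ioc 0 a) ≤ tl μ ((x - t) / a) * 1 :=
            mul_le_mul_of_nonneg_left measureReal_le_one (tl_nonneg _ _)
        _ ≤ tl μ (x / a' + s) := by rw [mul_one]; exact tl_anti μ h4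
        _ ≤ ε * tl ν a' * tl μ (x / a') := hx
        _ = ε * (tl ν a' * tl μ (x / a')) := by ring
        _ ≤ _ := mul_le_mul_of_nonneg_left (pt_lower μ ν hx0 ha'0) hε.le

lemma ae_snd {μ ν : Measure ℝ} [IsProbabilityMeasure μ] [IsProbabilityMeasure ν] {P : ℝ → Prop}
    (h : ∀ᵐ y ∂ν, P y) : ∀ᵐ p ∂(μ.prod ν), P p.2 :=
  Measure.quasiMeasurePreserving_snd.ae h

lemma upper_part {μ ν : Measure ℝ} [IsProbabilityMeasure μ] [IsProbabilityMeasure ν] {γ α : ℝ}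
    (hμ : LTail μ γ) (hν0 : ∀ᵐ y ∂ν, 0 ≤ y)
    (hA2 : ∀ b > 0, ∀ ε > 0, ∀ᶠ x in atTop, tl ν (b * x) ≤ ε * pt μ ν x)
    {y0 : ℝ} (hy0 : 0 < y0) (hy0' : 0 < tl ν y0)
    (hup : (γ = 0 ∧ α = 0) ∨ (0 < γ ∧ ∀ ε > 0, ∃ a > 0, ∃ a' > a, 0 < tl ν a' ∧ γ / a ≤ α + ε))
    {t : ℝ} (ht : 0 < t) {ε : ℝ} (hε : 0 < ε) :
    ∀ᶠ x in atTop, pt μ ν (x - t) ≤ (Real.exp (α * t) + 4 * ε) * pt μ ν x := by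
  obtain ⟨a, ha, hexp, hsm⟩ := small_part hμ hy0 hy0' hup ht hε
  have h1 := (hμ.2 (t / a)).eventually_le_const
    (show _ < Real.exp (γ * (t / a)) + ε by linarith)
  obtain ⟨M, hM⟩ := eventually_atTop.1 h1
  set U := max M 1 with hU
  have hU0 : 0 < U := lt_of_lt_of_le one_pos (le_max_right _ _)
  filter_upwards [hsm, hA2 (1 / U) (by positivity) ε hε, eventually_gt_atTop t] with x h2 h3 hxt
  have hx0 : 0 < x := by linarith
  set c := Real.exp (γ * (t / a)) + ε with hc
  have hc0 : 0 ≤ c := by positivity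
  set A : Set (ℝ × ℝ) := {p | x - t < p.1 * p.2} ∩ {p | p.2 ∈ Ioc a (1 / U * x)} with hA
  have hAm : MeasurableSet A := (meas_mul _).inter (measurable_snd measurableSet_Ioc)
  have hAle : (μ.prod ν).real A ≤ c * pt μ ν x := by
    refine fub μ ν hAm (meas_mul x) hc0 (Eventually.of_forall (fun y => ?_))
    by_cases hy : y ∈ Ioc a (1 / U * x)
    · have hy0 : 0 < y := ha.trans hy.1
      rw [sec_eq μ hy0]
      have hMy : M ≤ x / y := by
        refine (le_max_left M 1).trans ?_
        rw [← hU, le_div_iff₀ hy0]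
        have := mul_le_mul_of_nonneg_left hy.2 hU0.le
        calc U * y ≤ U * (1 / U * x) := this
          _ = x := by field_simp
      have h5 := hM _ hMy
      rw [div_le_iff₀ (hμ.1 _)] at h5
      refine le_trans ?_ h5
      refine measureReal_mono ?_
      intro z hz
      have hz1 : x - t < z * y := hz.1
      simp only [mem_Ioi]
      have e1 : t / y ≤ t / a := div_le_div_of_nonneg_left ht.le ha hy.1.le
      have e2 : (x - t) / y < z := by rwa [div_lt_iff₀ hy0]
      rw [sub_div] at e2
      linarith
    · have : {z : ℝ | (z, y) ∈ A} = ∅ := by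
        ext z
        simp only [hA, mem_inter_iff, mem_ofPred_eq, mem_empty_iff_false, iff_false]
        exact fun h => hy h.2
      rw [this, measureReal_empty]
      exact mul_nonneg hc0 measureReal_nonneg
  have hsub : pt μ ν (x - t) ≤
      (μ.prod ν).real ((Ioi ((x - t) / a) ×ˢ Ioc 0 a) ∪ (A ∪ univ ×ˢ Ioi (1 / U * x))) := by
    refine ENNReal.toReal_mono (by finiteness) (measure_mono_ae ?_)
    filter_upwards [ae_snd (μ := μ) hν0] with p hp hpx
    have hpx' : x - t < p.1 * p.2 := hpx
    change p ∈ (Ioi ((x - t) / a) ×ˢ Ioc 0 a) ∪ (A ∪ univ ×ˢ Ioi (1 / U * x))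
    have hp2 : 0 < p.2 := by
      rcases hp.lt_or_eq with h | h
      · exact h
      · rw [← h, mul_zero] at hpx'; linarith
    by_cases h5 : p.2 ≤ a
    · left
      refine ⟨?_, hp2, h5⟩
      have hp1 : 0 < p.1 := by
        by_contra h
        nlinarith
      simp only [mem_Ioi]
      rw [div_lt_iff₀ ha]
      nlinarith
    · right
      by_cases h6 : p.2 ≤ 1 / U * x
      · left
        exact ⟨hpx', not_le.1 h5, h6⟩
      · right
        exact ⟨mem_univ _, not_le.1 h6⟩
  have e1 := measureReal_union_le (μ := μ.prod ν) (Ioi ((x - t) / a) ×ˢ Ioc 0 a)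
    (A ∪ univ ×ˢ Ioi (1 / U * x))
  have e2 := measureReal_union_le (μ := μ.prod ν) A (univ ×ˢ Ioi (1 / U * x))
  rw [measureReal_prod_prod] at e1 e2
  rw [probReal_univ, one_mul] at e2
  have e3 : μ.real (Ioi ((x - t) / a)) = tl μ ((x - t) / a) := rfl
  have e4 : ν.real (Ioi (1 / U * x)) = tl ν (1 / U * x) := rfl
  rw [e3] at e1
  rw [e4] at e2
  have hpt : 0 ≤ pt μ ν x := measureReal_nonneg
  have hcle : c * pt μ ν x ≤ (Real.exp (α * t) + 2 * ε) * pt μ ν x :=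
    mul_le_mul_of_nonneg_right (by linarith) hpt
  linarith

lemma lower_part {μ ν : Measure ℝ} [IsProbabilityMeasure μ] [IsProbabilityMeasure ν] {γ α : ℝ}
    (hμ : LTail μ γ) (hν0 : ∀ᵐ y ∂ν, 0 ≤ y)
    (hlow : α = 0 ∨ ∃ β > 0, α = γ / β ∧ ∀ᵐ y ∂ν, y ≤ β)
    {t : ℝ} (ht : 0 < t) {ε : ℝ} (hε : 0 < ε) :
    ∀ᶠ x in atTop, pt μ ν x ≤ (Real.exp (-(α * t)) + ε) * pt μ ν (x - t) := by
  rcases hlow with rfl | ⟨β, hβ, hα, hνβ⟩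
  · refine Eventually.of_forall (fun x => ?_)
    have h1 : pt μ ν x ≤ pt μ ν (x - t) := pt_anti μ ν (by linarith)
    have h2 : 0 ≤ pt μ ν (x - t) := measureReal_nonneg
    simp only [zero_mul, neg_zero, Real.exp_zero]
    nlinarith
  · have h1 := (hμ.2 (-(t / β))).eventually_le_const
      (show _ < Real.exp (γ * -(t / β)) + ε by linarith)
    obtain ⟨M, hM⟩ := eventually_atTop.1 h1
    set U := max M 1 with hU
    have hU0 : 0 < U := lt_of_lt_of_le one_pos (le_max_right _ _)
    filter_upwards [eventually_gt_atTop t, eventually_ge_atTop (β * (U + t / β))] with x hxt hx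
    have hx0 : 0 < x := by linarith
    refine fub μ ν (meas_mul _) (meas_mul _) (by positivity) ?_
    filter_upwards [hν0, hνβ] with y hy hyβ
    rcases hy.lt_or_eq with hy | rfl
    · rw [sec_eq' μ hy, sec_eq' μ hy]
      have e1 : (x - t) / y ≤ x / y - t / β := by
        rw [sub_div]
        have := div_le_div_of_nonneg_left ht.le hy hyβ
        linarith
      have e0 : U + t / β ≤ x / y := by
        rw [le_div_iff₀ hy]
        refine le_trans ?_ hx
        rw [mul_comm]
        exact mul_le_mul_of_nonneg_right hyβ (by positivity)
      have e2 : M ≤ x / y - t / β := by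
        have := le_max_left M 1
        linarith
      have e3 := hM _ e2
      rw [div_le_iff₀ (hμ.1 _)] at e3
      have e4 : x / y - t / β - -(t / β) = x / y := by ring
      have e5 : γ * -(t / β) = -(α * t) := by rw [hα]; ring
      rw [e4, e5] at e3
      refine e3.trans ?_
      exact mul_le_mul_of_nonneg_left (tl_anti μ e1) (by positivity)
    · have : {a : ℝ | x < a * 0} = ∅ := by
        ext z
        simp [hx0.le]
      rw [this, measureReal_empty]
      positivity

lemma LTail_prod {μ ν : Measure ℝ} [IsProbabilityMeasure μ] [IsProbabilityMeasure ν] {γ α : ℝ}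
    (hμ : LTail μ γ) (hν0 : ∀ᵐ y ∂ν, 0 ≤ y)
    (hA2 : ∀ b > 0, ∀ ε > 0, ∀ᶠ x in atTop, tl ν (b * x) ≤ ε * pt μ ν x)
    {y0 : ℝ} (hy0 : 0 < y0) (hy0' : 0 < tl ν y0)
    (hlow : α = 0 ∨ ∃ β > 0, α = γ / β ∧ ∀ᵐ y ∂ν, y ≤ β)
    (hup : (γ = 0 ∧ α = 0) ∨ (0 < γ ∧ ∀ ε > 0, ∃ a > 0, ∃ a' > a, 0 < tl ν a' ∧ γ / a ≤ α + ε)) :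
    LTail ((μ.prod ν).map (fun p => p.1 * p.2)) α := by
  have hpos : ∀ x, 0 < pt μ ν x := by
    intro x
    have h1 : 0 < max x 1 := lt_of_lt_of_le one_pos (le_max_right _ _)
    exact (mul_pos hy0' (hμ.1 _)).trans_le
      ((pt_lower μ ν h1 hy0).trans (pt_anti μ ν (le_max_left x 1)))
  refine LTail_of_pos (fun x => by rw [tl_H]; exact hpos x) (fun t ht => ?_)
  simp only [tl_H]
  rw [tendsto_order]
  constructor
  · intro c hc
    rcases le_or_gt c 0 with h | h
    · exact Eventually.of_forall (fun x => h.trans_lt (div_pos (hpos _) (hpos _)))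
    · have h1 : Real.exp (-(α * t)) < 1 / c := by
        rw [Real.exp_neg, ← one_div]
        exact one_div_lt_one_div_of_lt h hc
      filter_upwards [lower_part hμ hν0 hlow ht
        (show 0 < (1 / c - Real.exp (-(α * t))) / 2 by linarith)] with x hx
      rw [lt_div_iff₀ (hpos x)]
      have h2 : pt μ ν x < 1 / c * pt μ ν (x - t) := by
        refine hx.trans_lt (mul_lt_mul_of_pos_right ?_ (hpos _))
        linarith
      calc c * pt μ ν x < c * (1 / c * pt μ ν (x - t)) := mul_lt_mul_of_pos_left h2 h
        _ = _ := by field_simp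
  · intro c hc
    filter_upwards [upper_part hμ hν0 hA2 hy0 hy0' hup ht
      (show 0 < (c - Real.exp (α * t)) / 8 by linarith)] with x hx
    rw [div_lt_iff₀ (hpos x)]
    refine hx.trans_lt (mul_lt_mul_of_pos_right ?_ (hpos _))
    linarith

lemma meas3 {f g h : ℝ × ℝ → ℝ} (hf : Measurable f) (hg : Measurable g) (hh : Measurable h)
    (x K : ℝ) : MeasurableSet {p : ℝ × ℝ | x < f p ∧ K < g p ∧ K < h p} :=
  (measurableSet_lt measurable_const hf).inter
    ((measurableSet_lt measurable_const hg).inter (measurableSet_lt measurable_const hh))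

/-- The section of the both-large event. -/
def Sec (μ : Measure ℝ) (x K b c : ℝ) : ℝ≥0∞ :=
  (μ.prod μ) {a | x < a.1 * b + a.2 * c ∧ K < a.1 * b ∧ K < a.2 * c}

lemma Sec_swap (μ : Measure ℝ) [IsProbabilityMeasure μ] (x K b c : ℝ) :
    Sec μ x K b c = Sec μ x K c b := by
  unfold Sec
  have hm : MeasurableSet {a : ℝ × ℝ | x < a.1 * c + a.2 * b ∧ K < a.1 * c ∧ K < a.2 * b} :=
    meas3 (by fun_prop) (by fun_prop) (by fun_prop) x K
  rw [← (Measure.measurePreserving_swap (μ := μ) (ν := μ)).measure_preimage hm.nullMeasurableSet]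
  congr 1
  ext ⟨a, b⟩
  simp [add_comm, and_comm]

lemma Sec_bound {μ : Measure ℝ} [IsProbabilityMeasure μ] {x K B M U C η b c : ℝ}
    (hx : 0 < x) (hK : 0 < K) (hB : 0 < B) (hM : 0 < M) (hU : 2 * M ≤ U) (hKMB : M * B ≤ K)
    (hC : 0 ≤ C) (hη : 0 ≤ η)
    (hcv : ∀ u, U ≤ u → cv μ u ≤ C * tl μ u) (hph : ∀ u, U ≤ u → ph μ M u ≤ η * tl μ u)
    (hc : 0 ≤ c) (hcb : c ≤ b) :
    Sec μ x K b c ≤ (Ioi B).indicator (fun _ => ENNReal.ofReal C) c * μ {a | x < a * b} +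
      (ENNReal.ofReal η * μ {a | x < a * b} +
        (Ioi (K / M)).indicator (fun _ => μ (Ioi (x / (2 * B)))) b +
        (Ioi (1 / U * x)).indicator (fun _ => 1) b) := by
  have hU0 : 0 < U := by linarith
  rcases hc.lt_or_eq with hc | rfl
  swap
  · have : Sec μ x K b 0 = 0 := by
      unfold Sec
      have : {a : ℝ × ℝ | x < a.1 * b + a.2 * 0 ∧ K < a.1 * b ∧ K < a.2 * 0} = ∅ := by
        ext a
        simp only [mul_zero, mem_ofPred_eq, mem_empty_iff_false, iff_false]
        rintro ⟨-, -, h⟩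
        linarith
      rw [this, measure_empty]
    rw [this]
    exact zero_le
  have hb : 0 < b := hc.trans_le hcb
  have hT : μ {a | x < a * b} = ENNReal.ofReal (tl μ (x / b)) := by
    rw [← sec_eq' μ hb, ofReal_measureReal]
  by_cases h1 : 1 / U * x < b
  · rw [indicator_of_mem (show b ∈ Ioi (1 / U * x) from h1)]
    refine le_trans prob_le_one ?_
    rw [← add_assoc]
    exact le_add_self
  · have hu : U ≤ x / b := by
      rw [le_div_iff₀ hb]
      have := mul_le_mul_of_nonneg_left (not_lt.1 h1) hU0.le
      calc U * b ≤ U * (1 / U * x) := this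
          _ = x := by field_simp
    have sum_gt : ∀ a : ℝ × ℝ, x < a.1 * b + a.2 * c → K < a.1 * b → K < a.2 * c →
        x / b < a.1 + a.2 := by
      intro a h1 h2 h3
      have : 0 < a.2 := by
        by_contra h
        nlinarith
      rw [div_lt_iff₀ hb]
      nlinarith
    by_cases h2 : B < c
    · rw [indicator_of_mem (show c ∈ Ioi B from h2)]
      refine le_trans ?_ le_self_add
      rw [hT, ← ENNReal.ofReal_mul hC]
      refine le_trans ?_ (ENNReal.ofReal_le_ofReal (hcv _ hu))
      rw [cv, ofReal_measureReal]
      refine measure_mono ?_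
      rintro a ⟨h3, h4, h5⟩
      exact sum_gt a h3 h4 h5
    · refine le_trans ?_ le_add_self
      refine le_trans ?_ le_self_add
      have hsub : {a : ℝ × ℝ | x < a.1 * b + a.2 * c ∧ K < a.1 * b ∧ K < a.2 * c} ⊆
          {a | x / b < a.1 + a.2 ∧ M < a.1 ∧ M < a.2} ∪
          {a | K / M < b ∧ x / (2 * B) < a.2} := by
        rintro a ⟨h3, h4, h5⟩
        have ha1 : 0 < a.1 := by
          by_contra h
          nlinarith
        have ha2 : 0 < a.2 := by
          by_contra h
          nlinarith
        have h6 : M < a.2 := by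
          by_contra h
          have : a.2 * c ≤ M * B := mul_le_mul (not_lt.1 h) (not_lt.1 h2) hc.le hM.le
          linarith
        by_cases h7 : M < a.1
        · exact Or.inl ⟨sum_gt a h3 h4 h5, h7, h6⟩
        · right
          have h8 : a.1 * b ≤ M * b := mul_le_mul_of_nonneg_right (not_lt.1 h7) hb.le
          refine ⟨?_, ?_⟩
          · rw [div_lt_iff₀ hM]
            linarith
          · rw [le_div_iff₀ hb] at hu
            have h9 : 2 * M * b ≤ U * b := mul_le_mul_of_nonneg_right hU hb.le
            have h10 : a.2 * c ≤ a.2 * B := mul_le_mul_of_nonneg_left (not_lt.1 h2) ha2.le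
            rw [div_lt_iff₀ (by positivity)]
            linarith
      refine (measure_mono hsub).trans ((measure_union_le _ _).trans ?_)
      refine add_le_add ?_ ?_
      · rw [hT, ← ENNReal.ofReal_mul hη]
        refine le_trans ?_ (ENNReal.ofReal_le_ofReal (hph _ hu))
        rw [ph, ofReal_measureReal]
      · by_cases h3 : K / M < b
        · rw [indicator_of_mem (show b ∈ Ioi (K / M) from h3)]
          have : {a : ℝ × ℝ | K / M < b ∧ x / (2 * B) < a.2} = univ ×ˢ Ioi (x / (2 * B)) := by
            ext a; simp [h3]
          rw [this, Measure.prod_prod, measure_univ, one_mul]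
        · have : {a : ℝ × ℝ | K / M < b ∧ x / (2 * B) < a.2} = ∅ := by
            ext a; simp [h3]
          rw [this, measure_empty]
          exact zero_le

lemma lint_split (ν : Measure ℝ) [IsProbabilityMeasure ν] {g T h : ℝ → ℝ≥0∞} (hg : Measurable g)
    (hT : Measurable T) (hh : Measurable h) :
    ∫⁻ q, (g q.2 * T q.1 + h q.1) ∂(ν.prod ν) =
      (∫⁻ c, g c ∂ν) * (∫⁻ b, T b ∂ν) + ∫⁻ b, h b ∂ν := by
  rw [lintegral_prod _ (by fun_prop)]
  have : ∀ b, ∫⁻ c, (g c * T b + h b) ∂ν = (∫⁻ c, g c ∂ν) * T b + h b := by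
    intro b
    rw [lintegral_add_left (by fun_prop), lintegral_mul_const _ hg]
    simp
  simp_rw [this]
  rw [lintegral_add_left (by fun_prop), lintegral_const_mul _ hT]

lemma ph_prod {μ ν : Measure ℝ} [IsProbabilityMeasure μ] [IsProbabilityMeasure ν]
    (hcv : ∃ C ≥ 0, ∀ᶠ u in atTop, cv μ u ≤ C * tl μ u)
    (hph : ∀ ε > 0, ∃ M > 0, ∀ᶠ u in atTop, ph μ M u ≤ ε * tl μ u)
    (hν0 : ∀ᵐ y ∂ν, 0 ≤ y)
    (hA2 : ∀ b > 0, ∀ ε > 0, ∀ᶠ x in atTop, tl ν (b * x) ≤ ε * pt μ ν x)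
    {ε : ℝ} (hε : 0 < ε) :
    ∃ K, ∀ᶠ x in atTop, ph ((μ.prod ν).map (fun p => p.1 * p.2)) K x ≤
      ε * tl ((μ.prod ν).map (fun p => p.1 * p.2)) x := by
  obtain ⟨C, hC, hcv⟩ := hcv
  set η := ε / (2 * (C + 3)) with hη
  have hη0 : 0 < η := by positivity
  have hηε : 2 * (C + 3) * η = ε := by rw [hη]; field_simp
  obtain ⟨B, hB1, hB⟩ := (((tl_tendsto ν).eventually_le_const hη0).and (eventually_gt_atTop 0)).exists
  obtain ⟨M, hM, hph⟩ := hph η hη0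
  have hKe : ∀ᶠ K in atTop, tl ν (K / M) ≤ η * tl ν (2 * B) := by
    rcases (tl_nonneg ν (2 * B)).lt_or_eq with h | h
    · exact ((tl_tendsto ν).comp (tendsto_id.atTop_div_const hM)).eventually_le_const
        (by positivity)
    · filter_upwards [(tendsto_id.atTop_div_const hM).eventually_ge_atTop (2 * B)] with K hK
      rw [← h, mul_zero, h]
      exact tl_anti ν hK
  obtain ⟨K, hK1, hK2, hK⟩ := (hKe.and ((eventually_ge_atTop (M * B)).and
    (eventually_gt_atTop 0))).exists
  obtain ⟨U, hU⟩ := eventually_atTop.1 ((hcv.and hph).and (eventually_ge_atTop (2 * M)))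
  have hU2 : 2 * M ≤ U := (hU U le_rfl).2
  have hU0 : 0 < U := by linarith
  refine ⟨K, ?_⟩
  filter_upwards [hA2 (1 / U) (by positivity) η hη0, eventually_gt_atTop 0] with x hx hx0
  rw [tl_H]
  have hpt0 : 0 ≤ pt μ ν x := measureReal_nonneg
  have hmA : MeasurableSet {p : ℝ × ℝ | x < p.1 + p.2 ∧ K < p.1 ∧ K < p.2} :=
    meas3 (by fun_prop) (by fun_prop) (by fun_prop) x K
  set g : ℝ → ℝ≥0∞ := (Ioi B).indicator (fun _ => ENNReal.ofReal C) with hg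
  set T : ℝ → ℝ≥0∞ := fun b => μ {a | x < a * b} with hT
  set h : ℝ → ℝ≥0∞ := fun b => ENNReal.ofReal η * T b +
        (Ioi (K / M)).indicator (fun _ => μ (Ioi (x / (2 * B)))) b +
        (Ioi (1 / U * x)).indicator (fun _ => 1) b with hh
  have hgm : Measurable g := measurable_const.indicator measurableSet_Ioi
  have hTm : Measurable T := measurable_measure_prodMk_right (meas_mul x)
  have hi1 : Measurable ((Ioi (K / M)).indicator (fun _ : ℝ => μ (Ioi (x / (2 * B))))) :=
    measurable_const.indicator measurableSet_Ioi
  have hi2 : Measurable ((Ioi (1 / U * x)).indicator (fun _ : ℝ => (1 : ℝ≥0∞))) :=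
    measurable_const.indicator measurableSet_Ioi
  have hhm : Measurable h := ((hTm.const_mul _).add hi1).add hi2
  have hTint : ∫⁻ b, T b ∂ν = ENNReal.ofReal (pt μ ν x) := by
    rw [pt, ofReal_measureReal, Measure.prod_apply_symm (meas_mul x)]
    rfl
  have hgint : ∫⁻ c, g c ∂ν = ENNReal.ofReal (C * tl ν B) := by
    rw [hg, lintegral_indicator_const measurableSet_Ioi, ENNReal.ofReal_mul hC, tl,
      ofReal_measureReal]
  have hhint : ∫⁻ b, h b ∂ν = ENNReal.ofReal (η * pt μ ν x +
      tl μ (x / (2 * B)) * tl ν (K / M) + tl ν (1 / U * x)) := by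
    rw [hh, lintegral_add_right _ hi2, lintegral_add_right _ hi1, lintegral_const_mul _ hTm, hTint,
      lintegral_indicator_const measurableSet_Ioi, lintegral_indicator_const measurableSet_Ioi,
      one_mul, ENNReal.ofReal_add, ENNReal.ofReal_add, ENNReal.ofReal_mul hη0.le,
      ENNReal.ofReal_mul (tl_nonneg _ _)]
    · simp only [tl]
      rw [ofReal_measureReal, ofReal_measureReal, ofReal_measureReal]
    · positivity
    · exact mul_nonneg (tl_nonneg _ _) (tl_nonneg _ _)
    · exact add_nonneg (by positivity) (mul_nonneg (tl_nonneg _ _) (tl_nonneg _ _))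
    · exact tl_nonneg _ _
  have hae : ∀ᵐ q ∂(ν.prod ν), 0 ≤ q.1 ∧ 0 ≤ q.2 := by
    have h1 : ∀ᵐ q ∂(ν.prod ν), 0 ≤ q.1 := Measure.quasiMeasurePreserving_fst.ae hν0
    filter_upwards [h1, ae_snd (μ := ν) hν0] with q a b using ⟨a, b⟩
  have hmain : (((μ.prod ν).map (fun p => p.1 * p.2)).prod ((μ.prod ν).map (fun p => p.1 * p.2)))
      {p : ℝ × ℝ | x < p.1 + p.2 ∧ K < p.1 ∧ K < p.2} ≤
      ∫⁻ q, (g q.2 * T q.1 + h q.1) ∂(ν.prod ν) + ∫⁻ q, (g q.1 * T q.2 + h q.2) ∂(ν.prod ν) := by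
    rw [prod_H μ ν hmA, ← lintegral_add_left (by fun_prop), Measure.prod_apply_symm]
    swap
    · exact hmA.preimage (f := fun q : (ℝ × ℝ) × (ℝ × ℝ) => (q.1.1 * q.2.1, q.1.2 * q.2.2))
        (by fun_prop)
    refine lintegral_mono_ae ?_
    filter_upwards [hae] with q hq
    change Sec μ x K q.1 q.2 ≤ _
    rcases le_total q.2 q.1 with hle | hle
    · refine le_trans ?_ le_self_add
      exact Sec_bound hx0 hK hB hM hU2 hK2 hC hη0.le (fun u hu => (hU u hu).1.1)
        (fun u hu => (hU u hu).1.2) hq.2 hle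
    · refine le_trans ?_ le_add_self
      rw [Sec_swap]
      exact Sec_bound hx0 hK hB hM hU2 hK2 hC hη0.le (fun u hu => (hU u hu).1.1)
        (fun u hu => (hU u hu).1.2) hq.1 hle
  have hsw : ∫⁻ q, (g q.1 * T q.2 + h q.2) ∂(ν.prod ν) =
      ∫⁻ q, (g q.2 * T q.1 + h q.1) ∂(ν.prod ν) :=
    lintegral_prod_swap (μ := ν) (ν := ν) (fun q : ℝ × ℝ => g q.2 * T q.1 + h q.1)
  have hCB : 0 ≤ C * tl ν B := mul_nonneg hC (tl_nonneg _ _)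
  have hmm : 0 ≤ tl μ (x / (2 * B)) * tl ν (K / M) := mul_nonneg (tl_nonneg _ _) (tl_nonneg _ _)
  have hlast : 0 ≤ tl ν (1 / U * x) := tl_nonneg _ _
  have hCp : 0 ≤ C * tl ν B * pt μ ν x := mul_nonneg hCB hpt0
  have hηp : 0 ≤ η * pt μ ν x := mul_nonneg hη0.le hpt0
  rw [hsw, lint_split ν hgm hTm hhm, hTint, hgint, hhint, ← ENNReal.ofReal_mul hCB,
    ← ENNReal.ofReal_add (by linarith) (by linarith),
    ← ENNReal.ofReal_add (by linarith) (by linarith)] at hmain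
  have hfin := ENNReal.toReal_mono ENNReal.ofReal_ne_top hmain
  rw [ENNReal.toReal_ofReal (by linarith)] at hfin
  refine le_trans hfin ?_
  have k1 : C * tl ν B * pt μ ν x ≤ C * η * pt μ ν x :=
    mul_le_mul_of_nonneg_right (mul_le_mul_of_nonneg_left hB1 hC) hpt0
  have k2 : tl μ (x / (2 * B)) * tl ν (K / M) ≤ η * pt μ ν x := by
    calc tl μ (x / (2 * B)) * tl ν (K / M) ≤ tl μ (x / (2 * B)) * (η * tl ν (2 * B)) :=
          mul_le_mul_of_nonneg_left hK1 (tl_nonneg _ _)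
      _ = η * (tl ν (2 * B) * tl μ (x / (2 * B))) := by ring
      _ ≤ _ := mul_le_mul_of_nonneg_left (pt_lower μ ν hx0 (by positivity)) hη0.le
  have k3 : ε * pt μ ν x = 2 * (C * η * pt μ ν x + 3 * (η * pt μ ν x)) := by
    rw [← hηε]; ring
  rw [k3]
  linarith

lemma eqv_iff {u v : ℝ → ℝ} {c : ℝ} (hc : c ≠ 0) (hv : ∀ᶠ x in atTop, v x ≠ 0) :
    (u ~[atTop] fun x => c * v x) ↔ Tendsto (fun x => u x / v x) atTop (𝓝 c) := by
  rw [isEquivalent_iff_tendsto_one (hv.mono fun x hx => mul_ne_zero hc hx)]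
  constructor
  · intro h
    have := h.const_mul c
    rw [mul_one] at this
    refine this.congr (fun x => ?_)
    simp only [Pi.div_apply]
    field_simp
  · intro h
    have := h.div_const c
    rw [div_self hc] at this
    refine this.congr (fun x => ?_)
    simp only [Pi.div_apply]
    rw [div_div, mul_comm]

lemma ae_le_of_tl {ν : Measure ℝ} [IsProbabilityMeasure ν] {c : ℝ} (h : ∀ y > c, tl ν y = 0) :
    ∀ᵐ y ∂ν, y ≤ c := by
  have h1 : ν (⋃ n : ℕ, Ioi (c + 1 / ((n : ℝ) + 1))) = 0 := by
    refine measure_iUnion_null (fun n => ?_)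
    have hp : (0 : ℝ) < 1 / ((n : ℝ) + 1) := by positivity
    have := h (c + 1 / ((n : ℝ) + 1)) (by linarith)
    rw [tl, measureReal_eq_zero_iff] at this
    exact this
  refine measure_mono_null ?_ h1
  intro y hy
  have hy' : c < y := not_le.1 hy
  obtain ⟨n, hn⟩ := exists_nat_one_div_lt (show 0 < y - c by linarith)
  refine mem_iUnion.2 ⟨n, ?_⟩
  simp only [mem_Ioi]
  linarith

section bridge

variable {Ω : Type*} [MeasureSpace Ω]

lemma rvTail_eq {Z : Ω → ℝ} (hZ : Measurable Z) (x : ℝ) :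
    rvTail Z x = tl (Measure.map Z ℙ) x := by
  rw [tl, map_measureReal_apply hZ measurableSet_Ioi]; rfl

lemma convSqTail_eq (Z : Ω → ℝ) (x : ℝ) :
    convSqTail Z x = cv (Measure.map Z ℙ) x := by
  rw [convSqTail, Measure.conv, Measure.map_apply (by fun_prop) measurableSet_Ioi]; rfl

lemma memS_iff [IsProbabilityMeasure (ℙ : Measure Ω)] {Z : Ω → ℝ} (hZ : Measurable Z) (γ : ℝ) :
    MemSGamma Z γ ↔ LTail (Measure.map Z ℙ) γ ∧
      Integrable (fun y => Real.exp (γ * y)) (Measure.map Z ℙ) ∧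
      Tendsto (fun x => cv (Measure.map Z ℙ) x / tl (Measure.map Z ℙ) x) atTop
        (𝓝 (2 * ∫ y, Real.exp (γ * y) ∂(Measure.map Z ℙ))) := by
  have hprob : IsProbabilityMeasure (Measure.map Z ℙ) :=
    Measure.isProbabilityMeasure_map hZ.aemeasurable
  unfold MemSGamma MemLGamma UnboundedDist
  simp only [rvTail_eq hZ, convSqTail_eq]
  have h1 : ((∀ x > 0, 0 < tl (Measure.map Z ℙ) x) ∧ ∀ t > 0,
      (fun x => tl (Measure.map Z ℙ) (x - t)) ~[atTop]
        (fun x => Real.exp (γ * t) * tl (Measure.map Z ℙ) x)) ↔ LTail (Measure.map Z ℙ) γ := by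
    constructor
    · rintro ⟨h0, h⟩
      have h0' : ∀ x, 0 < tl (Measure.map Z ℙ) x := fun x =>
        (h0 (max x 1) (lt_of_lt_of_le one_pos (le_max_right _ _))).trans_le
          (tl_anti _ (le_max_left _ _))
      refine LTail_of_pos h0' (fun t ht => ?_)
      exact (eqv_iff (Real.exp_pos _).ne' (Eventually.of_forall fun x => (h0' x).ne')).1 (h t ht)
    · rintro ⟨h0, h⟩
      refine ⟨fun x _ => h0 x, fun t _ => ?_⟩
      exact (eqv_iff (Real.exp_pos _).ne' (Eventually.of_forall fun x => (h0 x).ne')).2 (h t)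
  rw [h1]
  refine and_congr_right (fun hL => and_congr_right (fun hi => ?_))
  have hc := integral_exp_pos hi
  exact eqv_iff (by positivity) (Eventually.of_forall fun x => (hL.1 x).ne')

end bridge

theorem product_memS_of_indep {Ω : Type*} [MeasureSpace Ω] [IsProbabilityMeasure (ℙ : Measure Ω)]
    (X Y : Ω → ℝ) (hXm : Measurable X) (hYm : Measurable Y)
    (hYnonneg : ∀ ω, 0 ≤ Y ω)
    (hFunb : UnboundedDist X)
    (hXnd : ℙ {ω | X ω = 0} ≠ 1) (hYnd : ℙ {ω | Y ω = 0} ≠ 1)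
    (hInd : IndepFun X Y ℙ) (hA2 : Assumption2 X Y)
    (γ : ℝ) (hγ : 0 ≤ γ) (hFS : MemSGamma X γ) :
    MemSGamma (fun ω => X ω * Y ω) (gammaOverBeta Y γ) := by
  have hpμ : IsProbabilityMeasure (Measure.map X ℙ) :=
    Measure.isProbabilityMeasure_map hXm.aemeasurable
  have hpν : IsProbabilityMeasure (Measure.map Y ℙ) :=
    Measure.isProbabilityMeasure_map hYm.aemeasurable
  have hZm : Measurable (fun ω => X ω * Y ω) := hXm.mul hYm
  rw [memS_iff hXm] at hFS
  rw [memS_iff hZm]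
  have hlaw : Measure.map (fun ω => X ω * Y ω) ℙ =
      ((Measure.map X ℙ).prod (Measure.map Y ℙ)).map (fun p => p.1 * p.2) := by
    rw [← (indepFun_iff_map_prod_eq_prod_map_map hXm.aemeasurable hYm.aemeasurable).1 hInd,
      Measure.map_map (by fun_prop) (hXm.prodMk hYm)]
    rfl
  have hA2' : ∀ b > 0, ∀ ε > 0, ∀ᶠ x in atTop,
      tl (Measure.map Y ℙ) (b * x) ≤ ε * pt (Measure.map X ℙ) (Measure.map Y ℙ) x := by
    intro b hb ε hε
    filter_upwards [(hA2 b hb).def hε] with x hx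
    rw [rvTail_eq hYm, rvTail_eq hZm, hlaw, tl_H, Real.norm_of_nonneg (tl_nonneg _ _),
      Real.norm_of_nonneg (show 0 ≤ pt _ _ _ from measureReal_nonneg)] at hx
    exact hx
  have hS : {y : ℝ | 0 < rvTail Y y} = {y : ℝ | 0 < tl (Measure.map Y ℙ) y} := by
    simp only [rvTail_eq hYm]
  have hν0 : ∀ᵐ y ∂(Measure.map Y ℙ), 0 ≤ y := by
    rw [ae_map_iff hYm.aemeasurable measurableSet_Ici]
    exact Eventually.of_forall hYnonneg
  have hy : ∃ y0 > 0, 0 < tl (Measure.map Y ℙ) y0 := by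
    by_contra hcon
    push Not at hcon
    have h1 : ∀ᵐ y ∂(Measure.map Y ℙ), y ≤ 0 :=
      ae_le_of_tl (fun y hy => le_antisymm (hcon y hy) (tl_nonneg _ _))
    have h2 := ae_of_ae_map hYm.aemeasurable h1
    apply hYnd
    rw [← mem_ae_iff_prob_eq_one (measurableSet_eq_fun hYm measurable_const)]
    filter_upwards [h2] with ω hω
    exact le_antisymm hω (hYnonneg ω)
  obtain ⟨y0, hy0, hy0'⟩ := hy
  set μ := Measure.map X ℙ with hμdef
  set ν := Measure.map Y ℙ with hνdef
  have hα : ((gammaOverBeta Y γ = 0) ∨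
      ∃ β > 0, gammaOverBeta Y γ = γ / β ∧ ∀ᵐ y ∂ν, y ≤ β) ∧
      ((γ = 0 ∧ gammaOverBeta Y γ = 0) ∨
        (0 < γ ∧ ∀ ε > 0, ∃ a > 0, ∃ a' > a, 0 < tl ν a' ∧ γ / a ≤ gammaOverBeta Y γ + ε)) := by
    unfold gammaOverBeta
    rw [hS]
    by_cases hb : BddAbove {y : ℝ | 0 < tl ν y}
    · rw [if_pos hb]
      set β := sSup {y : ℝ | 0 < tl ν y} with hβ
      have hβ0 : 0 < β := hy0.trans_le (le_csSup hb hy0')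
      refine ⟨Or.inr ⟨β, hβ0, rfl, ae_le_of_tl (fun y hy => ?_)⟩, ?_⟩
      · by_contra hne
        exact absurd (le_csSup hb (show y ∈ {y : ℝ | 0 < tl ν y} from
          lt_of_le_of_ne (tl_nonneg _ _) (Ne.symm hne))) (not_le.2 hy)
      · rcases hγ.lt_or_eq with hγ | rfl
        · right
          refine ⟨hγ, fun ε hε => ?_⟩
          have hcont : Tendsto (fun a : ℝ => γ / a) (𝓝[<] β) (𝓝 (γ / β)) :=
            (tendsto_const_nhds.div tendsto_id hβ0.ne').mono_left nhdsWithin_le_nhds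
          have h1 := hcont.eventually_le_const (show γ / β < γ / β + ε by linarith)
          have h2 : ∀ᶠ a in 𝓝[<] β, a ∈ Ioo 0 β := Ioo_mem_nhdsLT hβ0
          obtain ⟨a, ha, ha2⟩ := (h1.and h2).exists
          obtain ⟨a', ha', haa'⟩ := exists_lt_of_lt_csSup ⟨y0, hy0'⟩ ha2.2
          exact ⟨a, ha2.1, a', haa', ha', ha⟩
        · left; simp
    · rw [if_neg hb]
      refine ⟨Or.inl rfl, ?_⟩
      rcases hγ.lt_or_eq with hγ | rfl
      · right
        refine ⟨hγ, fun ε hε => ?_⟩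
        obtain ⟨a', ha', haa'⟩ := not_bddAbove_iff.1 hb (γ / ε)
        refine ⟨γ / ε, by positivity, a', haa', ha', ?_⟩
        rw [zero_add, div_div_eq_mul_div, mul_div_assoc, mul_comm, div_mul_cancel₀ _ hγ.ne']
      · left; simp
  obtain ⟨hlow, hup⟩ := hα
  set α := gammaOverBeta Y γ with hαdef
  obtain ⟨hFL, hFi, hFc⟩ := hFS
  have hL := LTail_prod hFL hν0 hA2' hy0 hy0' hlow hup
  have hint : Integrable (fun y => Real.exp (α * y)) (Measure.map (fun ω => X ω * Y ω) ℙ) := by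
    rw [integrable_map_measure (by fun_prop) hZm.aemeasurable]
    rcases hlow with h0 | ⟨β, hβ, hαβ, hle⟩
    · rw [h0]
      simp [Function.comp_def]
    · have hFi' : Integrable (fun ω => Real.exp (γ * X ω)) ℙ :=
        (integrable_map_measure (by fun_prop) hXm.aemeasurable).1 hFi
      refine Integrable.mono' (hFi'.add (integrable_const 1)) (by fun_prop) ?_
      filter_upwards [ae_of_ae_map hYm.aemeasurable hle] with ω hω
      simp only [Function.comp, Pi.add_apply]
      rw [Real.norm_of_nonneg (Real.exp_pos _).le]
      rcases le_total (X ω) 0 with hX | hX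
      · have : α * (X ω * Y ω) ≤ 0 := by
          have h1 : 0 ≤ α := by rw [hαβ]; positivity
          have h2 : X ω * Y ω ≤ 0 := mul_nonpos_of_nonpos_of_nonneg hX (hYnonneg ω)
          exact mul_nonpos_of_nonneg_of_nonpos h1 h2
        have h3 := Real.exp_le_one_iff.2 this
        have h4 := Real.exp_pos (γ * X ω)
        linarith
      · have : α * (X ω * Y ω) ≤ γ * X ω := by
          have h1 : 0 ≤ γ * X ω := mul_nonneg hγ hX
          have h2 : Y ω / β ≤ 1 := (div_le_one hβ).2 hω
          calc α * (X ω * Y ω) = γ * X ω * (Y ω / β) := by rw [hαβ]; ring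
            _ ≤ γ * X ω * 1 := mul_le_mul_of_nonneg_left h2 h1
            _ = γ * X ω := mul_one _
        have h3 := Real.exp_le_exp.2 this
        linarith
  rw [hlaw] at hint ⊢
  have hpH : IsProbabilityMeasure ((μ.prod ν).map (fun p => p.1 * p.2)) :=
    Measure.isProbabilityMeasure_map (by fun_prop)
  refine ⟨hL, hint, cv_of_ph hL hint (fun ε hε => ?_)⟩
  refine ph_prod ?_ (fun ε hε => ph_small hFL hFi hFc hε) hν0 hA2' hε
  have hc := integral_exp_pos hFi
  refine ⟨2 * (∫ y, Real.exp (γ * y) ∂μ) + 1, by positivity, ?_⟩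
  filter_upwards [hFc.eventually_le_const (show _ < 2 * (∫ y, Real.exp (γ * y) ∂μ) + 1 by linarith)]
    with x hx
  rwa [div_le_iff₀ (hFL.1 x)] at hx
end
end

section
/- Let X be a real-valued random variable with unbounded distribution F and Y a nonnegative random variable with distribution G, neither degenerate at zero, and suppose (X,Y) follows an FGM distribution with parameter θ=1. Let α_G=inf{y: G(y)>0} denote the left endpoint of G and suppose P(Y=α_G)>0, and that Assumption 2 holds (Ḡ(bx)=o(H̄(x)) as x→∞ for every b>0, where H is the distribution of XY). Then P(XY>x) ~ ∫_0^∞ (1+(G(y)+G(y−)−1)) F̄(x/y) G(dy) as x→∞, where G(y−)=lim_{δ→0+} G(y−δ). -/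
open MeasureTheory ProbabilityTheory Filter Set Asymptotics

noncomputable section

/-! ### Extension of the FGM identity -/

/-- Every point not in the support with positive cdf has a support point to its left
with no mass in between. -/
lemma exists_support_left {Ω : Type*} [MeasureSpace Ω] [IsProbabilityMeasure (ℙ : Measure Ω)]
    (Z : Ω → ℝ) (x : ℝ) (hx : ℙ {ω | Z ω ≤ x} ≠ 0) :
    ∃ a ∈ distSupport Z, a ≤ x ∧ ℙ {ω | a < Z ω ∧ Z ω ≤ x} = 0 := by
  set S : Set ℝ := {a | a ≤ x ∧ ℙ {ω | a < Z ω ∧ Z ω ≤ x} = 0} with hS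
  have hne : S.Nonempty := ⟨x, le_rfl, by
    have : {ω | x < Z ω ∧ Z ω ≤ x} = ∅ := by ext ω; simp
    rw [this]; simp⟩
  have hlow : BddBelow S := by
    by_contra hb
    apply hx
    have h1 : ∀ n : ℕ, ℙ {ω | -(n : ℝ) < Z ω ∧ Z ω ≤ x} = 0 := by
      intro n
      rw [not_bddBelow_iff] at hb
      obtain ⟨a, ha, han⟩ := hb (-(n : ℝ))
      exact measure_mono_null (fun ω (hω : -(n : ℝ) < Z ω ∧ Z ω ≤ x) => (⟨han.trans hω.1, hω.2⟩ : a < Z ω ∧ Z ω ≤ x)) ha.2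
    refine measure_mono_null ?_ (measure_iUnion_null h1)
    intro ω hω
    obtain ⟨n, hn⟩ := exists_nat_gt (-(Z ω))
    exact mem_iUnion.2 ⟨n, by linarith, hω⟩
  have hle : ∀ b, sInf S < b → ℙ {ω | b < Z ω ∧ Z ω ≤ x} = 0 := by
    intro b hb
    obtain ⟨a, ha, hab⟩ := exists_lt_of_csInf_lt hne hb
    exact measure_mono_null (fun ω (hω : b < Z ω ∧ Z ω ≤ x) => (⟨hab.trans hω.1, hω.2⟩ : a < Z ω ∧ Z ω ≤ x)) ha.2
  have hax : sInf S ≤ x := csInf_le hlow ⟨le_rfl, by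
    have : {ω | x < Z ω ∧ Z ω ≤ x} = ∅ := by ext ω; simp
    rw [this]; simp⟩
  have hnull : ℙ {ω | sInf S < Z ω ∧ Z ω ≤ x} = 0 := by
    have h1 : ∀ n : ℕ, ℙ {ω | sInf S + 1 / ((n : ℝ) + 1) < Z ω ∧ Z ω ≤ x} = 0 := by
      intro n
      apply hle
      have : (0 : ℝ) < 1 / ((n : ℝ) + 1) := by positivity
      linarith
    refine measure_mono_null ?_ (measure_iUnion_null h1)
    intro ω hω
    obtain ⟨n, hn⟩ := exists_nat_one_div_lt (sub_pos.2 hω.1)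
    exact mem_iUnion.2 ⟨n, by linarith, hω.2⟩
  refine ⟨sInf S, ?_, hax, hnull⟩
  intro δ hδ
  rw [pos_iff_ne_zero]
  intro h0
  have hmem : sInf S - δ / 2 ∈ S := by
    refine ⟨by linarith, ?_⟩
    refine measure_mono_null (t := {ω | Z ω ∈ Ioo (sInf S - δ) (sInf S + δ)} ∪
      {ω | sInf S < Z ω ∧ Z ω ≤ x}) ?_ (measure_union_null h0 hnull)
    intro ω hω
    rcases lt_or_ge (sInf S) (Z ω) with h | h
    · exact Or.inr ⟨h, hω.2⟩
    · refine Or.inl ⟨?_, ?_⟩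
      · have := hω.1; linarith
      · linarith
  have := csInf_le hlow hmem
  linarith

lemma rvCdf_add_rvTail {Ω : Type*} [MeasureSpace Ω] [IsProbabilityMeasure (ℙ : Measure Ω)]
    (Z : Ω → ℝ) (hZ : Measurable Z) (x : ℝ) : rvTail Z x = 1 - rvCdf Z x := by
  unfold rvTail rvCdf
  have h : MeasurableSet {ω | Z ω ≤ x} := measurableSet_le hZ measurable_const
  have := probReal_compl_eq_one_sub (μ := (ℙ : Measure Ω)) h
  have e : {ω | Z ω ≤ x}ᶜ = {ω | x < Z ω} := by ext ω; simp
  rw [e] at this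
  exact this

/-- The FGM identity holds at all real points. -/
lemma fgm_all {Ω : Type*} [MeasureSpace Ω] [IsProbabilityMeasure (ℙ : Measure Ω)]
    (X Y : Ω → ℝ) (hXm : Measurable X) (hYm : Measurable Y) (h : FGM X Y 1) (x y : ℝ) :
    (ℙ {ω | x < X ω ∧ y < Y ω}).toReal =
        rvTail X x * rvTail Y y * (1 + rvCdf X x * rvCdf Y y) := by
  have key : ∀ (Z : Ω → ℝ), (a b : ℝ) → a ≤ b → ℙ {ω | a < Z ω ∧ Z ω ≤ b} = 0 →
      ∀ᵐ ω, (a < Z ω ↔ b < Z ω) := by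
    intro Z a b hab h0
    have : ∀ᵐ ω, ¬ (a < Z ω ∧ Z ω ≤ b) := by
      rw [ae_iff]; simpa using h0
    filter_upwards [this] with ω hω
    constructor
    · intro h1
      by_contra h2
      exact hω ⟨h1, not_lt.1 h2⟩
    · intro h1; linarith
  by_cases hx : ℙ {ω | X ω ≤ x} = 0
  · have hc : rvCdf X x = 0 := by unfold rvCdf; rw [hx]; rfl
    have ht : rvTail X x = 1 := by rw [rvCdf_add_rvTail X hXm, hc]; norm_num
    rw [hc, ht]
    have : ℙ {ω | x < X ω ∧ y < Y ω} = ℙ {ω | y < Y ω} := by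
      apply measure_congr
      have : ∀ᵐ ω, ¬ (X ω ≤ x) := by rw [ae_iff]; simpa using hx
      filter_upwards [this] with ω hω
      apply propext
      exact ⟨fun h => h.2, fun h => ⟨not_le.1 hω, h⟩⟩
    rw [this]; unfold rvTail; ring
  by_cases hy : ℙ {ω | Y ω ≤ y} = 0
  · have hc : rvCdf Y y = 0 := by unfold rvCdf; rw [hy]; rfl
    have ht : rvTail Y y = 1 := by rw [rvCdf_add_rvTail Y hYm, hc]; norm_num
    rw [hc, ht]
    have : ℙ {ω | x < X ω ∧ y < Y ω} = ℙ {ω | x < X ω} := by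
      apply measure_congr
      have : ∀ᵐ ω, ¬ (Y ω ≤ y) := by rw [ae_iff]; simpa using hy
      filter_upwards [this] with ω hω
      apply propext
      exact ⟨fun h => h.1, fun h => ⟨h, not_le.1 hω⟩⟩
    rw [this]; unfold rvTail; ring
  obtain ⟨a, haS, hax, ha0⟩ := exists_support_left X x hx
  obtain ⟨b, hbS, hby, hb0⟩ := exists_support_left Y y hy
  have hX := key X a x hax ha0
  have hY := key Y b y hby hb0
  have e1 : rvTail X a = rvTail X x := by
    unfold rvTail
    congr 1
    apply measure_congr
    filter_upwards [hX] with ω hω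
    exact propext hω
  have e2 : rvTail Y b = rvTail Y y := by
    unfold rvTail
    congr 1
    apply measure_congr
    filter_upwards [hY] with ω hω
    exact propext hω
  have e3 : rvCdf X a = rvCdf X x := by
    have h1 := rvCdf_add_rvTail X hXm a
    have h2 := rvCdf_add_rvTail X hXm x
    linarith
  have e4 : rvCdf Y b = rvCdf Y y := by
    have h1 := rvCdf_add_rvTail Y hYm b
    have h2 := rvCdf_add_rvTail Y hYm y
    linarith
  have e5 : ℙ {ω | a < X ω ∧ b < Y ω} = ℙ {ω | x < X ω ∧ y < Y ω} := by
    apply measure_congr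
    filter_upwards [hX, hY] with ω h1 h2
    exact propext (and_congr h1 h2)
  have := h.2 a haS b hbS
  rw [e1, e2, e3, e4, e5, one_mul] at this
  exact this

/-! ### The FGM kernel -/

/-- `1 - V(x) - V(x-)`. -/
def fgmKer (μ : Measure ℝ) (x : ℝ) : ℝ := μ.real (Ioi x) - μ.real (Iio x)

lemma fgmKer_measurable (μ : Measure ℝ) [IsProbabilityMeasure μ] : Measurable (fgmKer μ) := by
  apply Antitone.measurable
  intro a b hab
  unfold fgmKer
  have h1 : μ.real (Ioi b) ≤ μ.real (Ioi a) := measureReal_mono (Ioi_subset_Ioi hab)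
  have h2 : μ.real (Iio a) ≤ μ.real (Iio b) := measureReal_mono (Iio_subset_Iio hab)
  linarith

lemma fgmKer_abs_le (μ : Measure ℝ) [IsProbabilityMeasure μ] (x : ℝ) : |fgmKer μ x| ≤ 1 := by
  unfold fgmKer
  have h1 : μ.real (Ioi x) ≤ 1 := measureReal_le_one
  have h2 : μ.real (Iio x) ≤ 1 := measureReal_le_one
  have h3 : 0 ≤ μ.real (Ioi x) := measureReal_nonneg
  have h4 : 0 ≤ μ.real (Iio x) := measureReal_nonneg
  rw [abs_le]; constructor <;> linarith

lemma fgmKer_integrable (μ : Measure ℝ) [IsProbabilityMeasure μ] (ν : Measure ℝ)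
    [IsFiniteMeasure ν] : Integrable (fgmKer μ) ν :=
  Integrable.of_bound (fgmKer_measurable μ).aestronglyMeasurable 1
    (ae_of_all _ (fgmKer_abs_le μ))

lemma integral_Ioi_eq_integral_Iio (ν : Measure ℝ) [IsFiniteMeasure ν] :
    ∫ y, ν.real (Ioi y) ∂ν = ∫ y, ν.real (Iio y) ∂ν := by
  have hs : MeasurableSet {p : ℝ × ℝ | p.1 < p.2} := measurableSet_lt measurable_fst measurable_snd
  have h1 := Measure.prod_apply (μ := ν) (ν := ν) hs
  have h2 := Measure.prod_apply_symm (μ := ν) (ν := ν) hs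
  rw [h1] at h2
  have m1 : Measurable (fun y => ν (Ioi y)) := by
    apply Antitone.measurable
    intro a b hab
    exact measure_mono (Ioi_subset_Ioi hab)
  have m2 : Measurable (fun y => ν (Iio y)) := by
    apply Monotone.measurable
    intro a b hab
    exact measure_mono (Iio_subset_Iio hab)
  unfold Measure.real
  rw [integral_toReal m1.aemeasurable (ae_of_all _ fun _ => measure_lt_top _ _),
    integral_toReal m2.aemeasurable (ae_of_all _ fun _ => measure_lt_top _ _)]
  congr 1

lemma integral_fgmKer_Ioi (μ : Measure ℝ) [IsProbabilityMeasure μ] (x : ℝ) :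
    ∫ y in Ioi x, fgmKer μ y ∂μ = -(μ.real (Iic x) * μ.real (Ioi x)) := by
  set ν := μ.restrict (Ioi x) with hν
  have e : ∀ y ∈ Ioi x, fgmKer μ y = (ν.real (Ioi y) - ν.real (Iio y)) - μ.real (Iic x) := by
    intro y hy
    have hy' : x < y := hy
    have h1 : ν.real (Ioi y) = μ.real (Ioi y) := by
      rw [hν, measureReal_restrict_apply measurableSet_Ioi,
        inter_eq_left.2 (Ioi_subset_Ioi hy'.le)]
    have h2 : ν.real (Iio y) + μ.real (Iic x) = μ.real (Iio y) := by
      rw [hν, measureReal_restrict_apply measurableSet_Iio, ← measureReal_union]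
      · congr 1
        ext z
        simp only [mem_union, mem_inter_iff, mem_Iio, mem_Ioi, mem_Iic]
        constructor
        · rintro (h | h)
          · exact h.1
          · exact lt_of_le_of_lt h hy'
        · intro h
          rcases lt_or_ge x z with h' | h'
          · exact Or.inl ⟨h, h'⟩
          · exact Or.inr h'
      · rw [Set.disjoint_left]
        intro z hz hz'
        exact absurd (mem_Ioi.1 hz.2) (not_lt.2 hz')
      · exact measurableSet_Iic
    unfold fgmKer
    linarith
  rw [setIntegral_congr_fun measurableSet_Ioi e]
  have i1 : Integrable (fun y => ν.real (Ioi y)) ν := by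
    refine Integrable.of_bound (Antitone.measurable ?_).aestronglyMeasurable (ν.real univ) ?_
    · intro a b hab
      exact measureReal_mono (Ioi_subset_Ioi hab)
    · refine ae_of_all _ fun y => ?_
      rw [Real.norm_of_nonneg measureReal_nonneg]
      exact measureReal_mono (subset_univ _)
  have i2 : Integrable (fun y => ν.real (Iio y)) ν := by
    refine Integrable.of_bound (Monotone.measurable ?_).aestronglyMeasurable (ν.real univ) ?_
    · intro a b hab
      exact measureReal_mono (Iio_subset_Iio hab)
    · refine ae_of_all _ fun y => ?_
      rw [Real.norm_of_nonneg measureReal_nonneg]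
      exact measureReal_mono (subset_univ _)
  have i3 : Integrable (fun y => ν.real (Ioi y) - ν.real (Iio y)) ν := i1.sub i2
  rw [← hν, integral_sub i3 (integrable_const _), integral_sub i1 i2,
    integral_Ioi_eq_integral_Iio]
  simp [hν, mul_comm]

/-- The density of the joint law. -/
def fgmDens (μ ν : Measure ℝ) (p : ℝ × ℝ) : ℝ := 1 + fgmKer μ p.1 * fgmKer ν p.2

lemma fgmDens_bounds (μ ν : Measure ℝ) [IsProbabilityMeasure μ] [IsProbabilityMeasure ν]
    (p : ℝ × ℝ) : 0 ≤ fgmDens μ ν p ∧ fgmDens μ ν p ≤ 2 := by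
  have h1 := fgmKer_abs_le μ p.1
  have h2 := fgmKer_abs_le ν p.2
  have h3 : |fgmKer μ p.1 * fgmKer ν p.2| ≤ 1 := by
    rw [abs_mul]; exact mul_le_one₀ h1 (abs_nonneg _) h2
  rw [abs_le] at h3
  unfold fgmDens
  constructor <;> linarith [h3.1, h3.2]

lemma fgmDens_measurable (μ ν : Measure ℝ) [IsProbabilityMeasure μ] [IsProbabilityMeasure ν] :
    Measurable (fgmDens μ ν) :=
  measurable_const.add (((fgmKer_measurable μ).comp measurable_fst).mul
    ((fgmKer_measurable ν).comp measurable_snd))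

lemma fgmDens_integrable (μ ν : Measure ℝ) [IsProbabilityMeasure μ] [IsProbabilityMeasure ν]
    (ρ : Measure (ℝ × ℝ)) [IsFiniteMeasure ρ] : Integrable (fgmDens μ ν) ρ :=
  Integrable.of_bound (fgmDens_measurable μ ν).aestronglyMeasurable 2
    (ae_of_all _ fun p => by
      rw [Real.norm_of_nonneg (fgmDens_bounds μ ν p).1]; exact (fgmDens_bounds μ ν p).2)

lemma fgm_withDensity_real (μ ν : Measure ℝ) [IsProbabilityMeasure μ] [IsProbabilityMeasure ν]
    (s : Set (ℝ × ℝ)) (hs : MeasurableSet s) :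
    ((μ.prod ν).withDensity (fun p => ENNReal.ofReal (fgmDens μ ν p))) s =
      ENNReal.ofReal (∫ p in s, fgmDens μ ν p ∂(μ.prod ν)) := by
  rw [withDensity_apply _ hs, ofReal_integral_eq_lintegral_ofReal (fgmDens_integrable μ ν _)
    (ae_of_all _ fun p => (fgmDens_bounds μ ν p).1)]

lemma spanning_Ioi : IsCountablySpanning (range (Ioi : ℝ → Set ℝ)) := by
  refine ⟨fun n => Ioi (-(n : ℝ)), fun n => ⟨_, rfl⟩, ?_⟩
  ext z
  simp only [mem_iUnion, mem_Ioi, mem_univ, iff_true]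
  obtain ⟨n, hn⟩ := exists_nat_gt (-z)
  exact ⟨n, by linarith⟩

lemma setIntegral_fgmDens_quadrant (μ ν : Measure ℝ) [IsProbabilityMeasure μ]
    [IsProbabilityMeasure ν] (x y : ℝ) :
    ∫ p in Ioi x ×ˢ Ioi y, fgmDens μ ν p ∂(μ.prod ν) =
      μ.real (Ioi x) * ν.real (Ioi y) * (1 + μ.real (Iic x) * ν.real (Iic y)) := by
  unfold fgmDens
  rw [integral_add (integrable_const _)]
  · rw [setIntegral_prod_mul (fgmKer μ) (fgmKer ν), integral_fgmKer_Ioi, integral_fgmKer_Ioi]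
    simp [measureReal_prod_prod]
    ring
  · have := (fgmDens_integrable μ ν ((μ.prod ν).restrict (Ioi x ×ˢ Ioi y))).sub
      (integrable_const (1 : ℝ))
    refine this.congr (ae_of_all _ fun p => ?_)
    simp [fgmDens]

/-- The joint law has the FGM density. -/
lemma fgm_law {Ω : Type*} [MeasureSpace Ω] [IsProbabilityMeasure (ℙ : Measure Ω)]
    (X Y : Ω → ℝ) (hXm : Measurable X) (hYm : Measurable Y) (h : FGM X Y 1)
    (μ ν : Measure ℝ) [IsProbabilityMeasure μ] [IsProbabilityMeasure ν]
    (hμ : μ = Measure.map X ℙ) (hν : ν = Measure.map Y ℙ) :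
    Measure.map (fun ω => (X ω, Y ω)) ℙ =
      (μ.prod ν).withDensity (fun p => ENNReal.ofReal (fgmDens μ ν p)) := by
  have hb : MeasurableSpace.generateFrom (range (Ioi : ℝ → Set ℝ)) =
      (inferInstance : MeasurableSpace ℝ) := by
    rw [← borel_eq_generateFrom_Ioi]
    exact (BorelSpace.measurable_eq).symm
  have hm : Measurable (fun ω => (X ω, Y ω)) := hXm.prodMk hYm
  have : IsProbabilityMeasure (Measure.map (fun ω => (X ω, Y ω)) (ℙ : Measure Ω)) :=
    Measure.isProbabilityMeasure_map hm.aemeasurable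
  refine Measure.ext_of_generateFrom_of_iUnion _
    (fun n : ℕ => Ioi (-(n : ℝ)) ×ˢ Ioi (-(n : ℝ)))
    (generateFrom_eq_prod hb hb spanning_Ioi spanning_Ioi).symm
    (isPiSystem_Ioi.prod isPiSystem_Ioi) ?_ ?_ ?_ ?_
  · ext ⟨z, w⟩
    simp only [mem_iUnion, mem_prod, mem_Ioi, mem_univ, iff_true]
    obtain ⟨n, hn⟩ := exists_nat_gt (max (-z) (-w))
    have h1 := le_max_left (-z) (-w)
    have h2 := le_max_right (-z) (-w)
    exact ⟨n, by linarith, by linarith⟩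
  · intro n
    exact ⟨_, ⟨_, rfl⟩, _, ⟨_, rfl⟩, rfl⟩
  · intro n
    exact measure_ne_top _ _
  · rintro s ⟨_, ⟨x, rfl⟩, _, ⟨y, rfl⟩, rfl⟩
    have hs : MeasurableSet (Ioi x ×ˢ Ioi y) := measurableSet_Ioi.prod measurableSet_Ioi
    have hfg := fgm_all X Y hXm hYm h x y
    have e0 : Measure.map (fun ω => (X ω, Y ω)) ℙ (Ioi x ×ˢ Ioi y) =
        ℙ {ω | x < X ω ∧ y < Y ω} := by
      rw [Measure.map_apply hm hs]; rfl
    change Measure.map (fun ω => (X ω, Y ω)) ℙ (Ioi x ×ˢ Ioi y) =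
      ((μ.prod ν).withDensity (fun p => ENNReal.ofReal (fgmDens μ ν p))) (Ioi x ×ˢ Ioi y)
    rw [fgm_withDensity_real μ ν _ hs, setIntegral_fgmDens_quadrant, e0,
      ← ENNReal.ofReal_toReal (measure_ne_top ℙ {ω | x < X ω ∧ y < Y ω}), hfg]
    congr 1
    subst hμ hν
    simp only [Measure.real, Measure.map_apply hXm measurableSet_Ioi,
      Measure.map_apply hYm measurableSet_Ioi, Measure.map_apply hXm measurableSet_Iic,
      Measure.map_apply hYm measurableSet_Iic]
    rfl

/-- Exact formula for the tail of the product. -/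
lemma fgm_product_tail {Ω : Type*} [MeasureSpace Ω] [IsProbabilityMeasure (ℙ : Measure Ω)]
    (X Y : Ω → ℝ) (hXm : Measurable X) (hYm : Measurable Y) (h : FGM X Y 1)
    (hY0 : ∀ ω, 0 ≤ Y ω)
    (μ ν : Measure ℝ) [IsProbabilityMeasure μ] [IsProbabilityMeasure ν]
    (hμ : μ = Measure.map X ℙ) (hν : ν = Measure.map Y ℙ) (x : ℝ) (hx : 0 < x) :
    rvTail (fun ω => X ω * Y ω) x =
      ∫ y in Ioi (0 : ℝ), (μ.real (Ioi (x / y)) -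
        μ.real (Iic (x / y)) * μ.real (Ioi (x / y)) * fgmKer ν y) ∂ν := by
  have hs : MeasurableSet {p : ℝ × ℝ | x < p.1 * p.2} :=
    measurableSet_lt measurable_const (measurable_fst.mul measurable_snd)
  have hm : Measurable (fun ω => (X ω, Y ω)) := hXm.prodMk hYm
  have e0 : rvTail (fun ω => X ω * Y ω) x =
      ∫ p in {p : ℝ × ℝ | x < p.1 * p.2}, fgmDens μ ν p ∂(μ.prod ν) := by
    have e1 : ℙ {ω | x < X ω * Y ω} =
        Measure.map (fun ω => (X ω, Y ω)) ℙ {p : ℝ × ℝ | x < p.1 * p.2} := by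
      rw [Measure.map_apply hm hs]; rfl
    unfold rvTail
    rw [e1, fgm_law X Y hXm hYm h μ ν hμ hν, fgm_withDensity_real μ ν _ hs,
      ENNReal.toReal_ofReal (integral_nonneg fun p => (fgmDens_bounds μ ν p).1)]
  rw [e0, ← integral_indicator hs,
    integral_prod_symm _ ((fgmDens_integrable μ ν _).indicator hs),
    ← integral_indicator measurableSet_Ioi]
  apply integral_congr_ae
  have hnn : ∀ᵐ y ∂ν, 0 ≤ y := by
    rw [hν, ae_map_iff hYm.aemeasurable measurableSet_Ici]
    exact ae_of_all _ hY0
  filter_upwards [hnn] with y hy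
  rcases hy.eq_or_lt with h0 | h0
  · subst h0
    have : ∀ u : ℝ, indicator {p : ℝ × ℝ | x < p.1 * p.2} (fgmDens μ ν) (u, 0) = 0 := by
      intro u
      apply indicator_of_notMem
      simp [hx.le]
    simp [this]
  · rw [indicator_of_mem (show y ∈ Ioi (0 : ℝ) from h0)]
    have : ∀ u : ℝ, indicator {p : ℝ × ℝ | x < p.1 * p.2} (fgmDens μ ν) (u, y) =
        indicator (Ioi (x / y)) (fun u => 1 + fgmKer μ u * fgmKer ν y) u := by
      intro u
      by_cases hu : x < u * y
      · rw [indicator_of_mem (show (u, y) ∈ {p : ℝ × ℝ | x < p.1 * p.2} from hu),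
          indicator_of_mem (show u ∈ Ioi (x / y) from (div_lt_iff₀ h0).2 hu)]
        rfl
      · rw [indicator_of_notMem (show (u, y) ∉ {p : ℝ × ℝ | x < p.1 * p.2} from hu),
          indicator_of_notMem (show u ∉ Ioi (x / y) from fun h' => hu ((div_lt_iff₀ h0).1 h'))]
    simp only [this]
    rw [integral_indicator measurableSet_Ioi, integral_add (integrable_const _)
      ((fgmKer_integrable μ _).mul_const _), integral_mul_const, integral_fgmKer_Ioi]
    simp
    ring

theorem product_tail_asymp_of_fgm_theta_one {Ω : Type*} [MeasureSpace Ω] [IsProbabilityMeasure (ℙ : Measure Ω)]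
    (X Y : Ω → ℝ) (hXm : Measurable X) (hYm : Measurable Y)
    (hYnonneg : ∀ ω, 0 ≤ Y ω)
    (hFunb : UnboundedDist X)
    (hXnd : ℙ {ω | X ω = 0} ≠ 1) (hYnd : ℙ {ω | Y ω = 0} ≠ 1)
    (hFGM : FGM X Y 1)
    (hatom : 0 < ℙ {ω | Y ω = sInf {y : ℝ | 0 < rvCdf Y y}})
    (hA2 : Assumption2 X Y) :
    (fun x => rvTail (fun ω => X ω * Y ω) x) ~[atTop]
      (fun x => ∫ y in Ioi (0 : ℝ),
        (1 + (rvCdf Y y + rvCdfLeft Y y - 1)) * rvTail X (x / y) ∂(Measure.map Y ℙ)) := by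
  have hμp : IsProbabilityMeasure (Measure.map X (ℙ : Measure Ω)) :=
    Measure.isProbabilityMeasure_map hXm.aemeasurable
  have hνp : IsProbabilityMeasure (Measure.map Y (ℙ : Measure Ω)) :=
    Measure.isProbabilityMeasure_map hYm.aemeasurable
  set μ := Measure.map X (ℙ : Measure Ω) with hμ
  set ν := Measure.map Y (ℙ : Measure Ω) with hν
  have tX : ∀ x, rvTail X x = μ.real (Ioi x) := by
    intro x
    rw [hμ, Measure.real, Measure.map_apply hXm measurableSet_Ioi]; rfl
  have tY : ∀ x, rvTail Y x = ν.real (Ioi x) := by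
    intro x
    rw [hν, Measure.real, Measure.map_apply hYm measurableSet_Ioi]; rfl
  have cY : ∀ x, rvCdf Y x = ν.real (Iic x) := by
    intro x
    rw [hν, Measure.real, Measure.map_apply hYm measurableSet_Iic]; rfl
  have lY : ∀ x, rvCdfLeft Y x = ν.real (Iio x) := by
    intro x
    rw [hν, Measure.real, Measure.map_apply hYm measurableSet_Iio]; rfl
  have cX : ∀ x, μ.real (Iic x) = 1 - μ.real (Ioi x) := by
    intro x
    have := probReal_compl_eq_one_sub (μ := μ) (measurableSet_Ioi (a := x))
    rwa [compl_Ioi] at this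
  have cY' : ∀ x, ν.real (Ioi x) = 1 - ν.real (Iic x) := by
    intro x
    have := probReal_compl_eq_one_sub (μ := ν) (measurableSet_Iic (a := x))
    rwa [compl_Iic] at this
  set α := sInf {y : ℝ | 0 < rvCdf Y y} with hα
  set p := ν.real {α} with hp
  have hp0 : 0 < p := by
    rw [hp, Measure.real, ENNReal.toReal_pos_iff]
    refine ⟨?_, measure_lt_top _ _⟩
    rw [hν, Measure.map_apply hYm (measurableSet_singleton _)]
    exact hatom
  -- almost surely `Y ≥ α`
  have hbdd : BddBelow {y : ℝ | 0 < rvCdf Y y} := by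
    refine ⟨0, fun y hy => ?_⟩
    by_contra hlt
    have : {ω | Y ω ≤ y} = ∅ := by
      ext ω
      simp only [mem_ofPred_eq, mem_empty_iff_false, iff_false, not_le]
      exact lt_of_lt_of_le (not_le.1 hlt) (hYnonneg ω)
    have h1 : 0 < rvCdf Y y := hy
    unfold rvCdf at h1
    rw [this] at h1
    simp at h1
  have hαae : ∀ᵐ y ∂ν, α ≤ y := by
    rw [ae_iff]
    have h1 : ∀ n : ℕ, ν (Iic (α - 1 / ((n : ℝ) + 1))) = 0 := by
      intro n
      by_contra hne
      have hpos : 0 < rvCdf Y (α - 1 / ((n : ℝ) + 1)) := by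
        rw [cY, Measure.real]
        exact ENNReal.toReal_pos hne (measure_ne_top _ _)
      have h2 : α ≤ α - 1 / ((n : ℝ) + 1) := csInf_le hbdd hpos
      have : (0 : ℝ) < 1 / ((n : ℝ) + 1) := by positivity
      linarith
    refine measure_mono_null ?_ (measure_iUnion_null h1)
    intro y hy
    have hy' : y < α := not_le.1 hy
    obtain ⟨n, hn⟩ := exists_nat_one_div_lt (sub_pos.2 hy')
    exact mem_iUnion.2 ⟨n, by rw [mem_Iic]; linarith⟩
  have hker : ∀ᵐ y ∂ν, fgmKer ν y ≤ 1 - p := by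
    filter_upwards [hαae] with y hy
    have h1 : p ≤ ν.real (Iic y) := measureReal_mono (by
      intro z hz
      rw [mem_singleton_iff] at hz
      rw [hz]; exact hy)
    have h2 : 0 ≤ ν.real (Iio y) := measureReal_nonneg
    unfold fgmKer
    rw [cY' y]
    linarith
  -- integrability
  have mT : Measurable (fun t => μ.real (Ioi t)) := by
    apply Antitone.measurable
    intro a b hab
    exact measureReal_mono (Ioi_subset_Ioi hab)
  have T0 : ∀ t, 0 ≤ μ.real (Ioi t) := fun t => measureReal_nonneg
  have T1 : ∀ t, μ.real (Ioi t) ≤ 1 := fun t => measureReal_le_one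
  have mF : ∀ x : ℝ, Measurable (fun y => μ.real (Ioi (x / y))) := fun x =>
    mT.comp (measurable_const.div measurable_id)
  have mk := fgmKer_measurable ν
  set ν₀ := ν.restrict (Ioi 0) with hν₀
  have iF : ∀ x : ℝ, Integrable (fun y => μ.real (Ioi (x / y))) ν₀ := fun x =>
    Integrable.of_bound (mF x).aestronglyMeasurable 1 (ae_of_all _ fun y => by
      rw [Real.norm_of_nonneg (T0 _)]; exact T1 _)
  have iFk : ∀ x : ℝ, Integrable (fun y => μ.real (Ioi (x / y)) * fgmKer ν y) ν₀ := fun x =>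
    Integrable.of_bound ((mF x).mul mk).aestronglyMeasurable 1 (ae_of_all _ fun y => by
      rw [norm_mul, Real.norm_of_nonneg (T0 _)]
      exact mul_le_one₀ (T1 _) (norm_nonneg _) (fgmKer_abs_le ν y))
  have iFFk : ∀ x : ℝ, Integrable
      (fun y => μ.real (Ioi (x / y)) * (μ.real (Ioi (x / y)) * fgmKer ν y)) ν₀ := fun x =>
    Integrable.of_bound ((mF x).mul ((mF x).mul mk)).aestronglyMeasurable 1
      (ae_of_all _ fun y => by
      rw [norm_mul, norm_mul, Real.norm_of_nonneg (T0 _)]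
      exact mul_le_one₀ (T1 _) (mul_nonneg (T0 _) (norm_nonneg _))
        (mul_le_one₀ (T1 _) (norm_nonneg _) (fgmKer_abs_le ν y)))
  -- the two tails
  have hH : ∀ x : ℝ, 0 < x → rvTail (fun ω => X ω * Y ω) x =
      ∫ y, (μ.real (Ioi (x / y)) - μ.real (Ioi (x / y)) * fgmKer ν y +
        μ.real (Ioi (x / y)) * (μ.real (Ioi (x / y)) * fgmKer ν y)) ∂ν₀ := by
    intro x hx
    rw [fgm_product_tail X Y hXm hYm hFGM hYnonneg μ ν hμ hν x hx]
    congr 1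
    funext y
    rw [cX]; ring
  have hI : ∀ x : ℝ, (∫ y in Ioi (0 : ℝ),
        (1 + (rvCdf Y y + rvCdfLeft Y y - 1)) * rvTail X (x / y) ∂ν) =
      ∫ y, (μ.real (Ioi (x / y)) - μ.real (Ioi (x / y)) * fgmKer ν y) ∂ν₀ := by
    intro x
    congr 1
    funext y
    rw [cY, lY, tX, fgmKer, cY']; ring
  have hlow : ∀ x : ℝ, 0 < x → p * (∫ y, μ.real (Ioi (x / y)) ∂ν₀) ≤
      rvTail (fun ω => X ω * Y ω) x := by
    intro x hx
    rw [hH x hx, ← integral_const_mul]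
    refine integral_mono_ae ((iF x).const_mul p) (((iF x).sub (iFk x)).add (iFFk x)) ?_
    filter_upwards [ae_restrict_of_ae hker] with y hy
    have t0 := T0 (x / y)
    have t1 := T1 (x / y)
    change p * μ.real (Ioi (x / y)) ≤ μ.real (Ioi (x / y)) - μ.real (Ioi (x / y)) * fgmKer ν y +
        μ.real (Ioi (x / y)) * (μ.real (Ioi (x / y)) * fgmKer ν y)
    have hp1 : p ≤ 1 := measureReal_le_one
    have hb : p ≤ 1 - (1 - μ.real (Ioi (x / y))) * fgmKer ν y := by
      rcases le_or_gt (fgmKer ν y) 0 with hk | hk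
      · nlinarith
      · nlinarith
    nlinarith [mul_le_mul_of_nonneg_left hb t0]
  have hdiff : ∀ x M : ℝ, 0 < x → 0 < M →
      |(∫ y, (μ.real (Ioi (x / y)) - μ.real (Ioi (x / y)) * fgmKer ν y) ∂ν₀) -
        rvTail (fun ω => X ω * Y ω) x| ≤
      μ.real (Ioi M) * (∫ y, μ.real (Ioi (x / y)) ∂ν₀) + ν.real (Ioi (1 / M * x)) := by
    intro x M hx hM
    have i0 : Integrable (fun y => μ.real (Ioi (x / y)) -
        μ.real (Ioi (x / y)) * fgmKer ν y) ν₀ := (iF x).sub (iFk x)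
    rw [hH x hx, integral_add i0 (iFFk x)]
    have e : ∀ a b : ℝ, |a - (a + b)| = |b| := by
      intro a b
      rw [← abs_neg b]; congr 1; ring
    rw [e]
    have i1 : Integrable (indicator (Ioi (1 / M * x)) (fun _ : ℝ => (1 : ℝ))) ν₀ :=
      (integrable_const _).indicator measurableSet_Ioi
    have hle : ν₀.real (Ioi (1 / M * x)) ≤ ν.real (Ioi (1 / M * x)) :=
      ENNReal.toReal_mono (measure_ne_top _ _) (Measure.restrict_apply_le _ _)
    have e2 : ∫ y, indicator (Ioi (1 / M * x)) (fun _ : ℝ => (1 : ℝ)) y ∂ν₀ =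
        ν₀.real (Ioi (1 / M * x)) := by
      rw [integral_indicator measurableSet_Ioi]; simp
    refine le_trans ?_ (add_le_add_right hle _)
    rw [← e2, ← integral_const_mul, ← integral_add ((iF x).const_mul _) i1,
      ← Real.norm_eq_abs]
    refine norm_integral_le_of_norm_le (((iF x).const_mul _).add i1) ?_
    filter_upwards [ae_restrict_mem (measurableSet_Ioi (a := (0 : ℝ)))] with y hy
    have hy0 : 0 < y := hy
    have t0 := T0 (x / y)
    have t1 := T1 (x / y)
    have hk := fgmKer_abs_le ν y
    have hb : ‖μ.real (Ioi (x / y)) * (μ.real (Ioi (x / y)) * fgmKer ν y)‖ ≤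
        μ.real (Ioi (x / y)) * μ.real (Ioi (x / y)) := by
      rw [norm_mul, norm_mul, Real.norm_of_nonneg t0]
      exact mul_le_mul_of_nonneg_left (mul_le_of_le_one_right t0 hk) t0
    refine hb.trans ?_
    by_cases hc : 1 / M * x < y
    · rw [indicator_of_mem (show y ∈ Ioi (1 / M * x) from hc)]
      have := mul_nonneg (T0 M) t0
      nlinarith
    · rw [indicator_of_notMem (show y ∉ Ioi (1 / M * x) from hc), add_zero]
      refine mul_le_mul_of_nonneg_right (measureReal_mono (Ioi_subset_Ioi ?_)) t0
      rw [le_div_iff₀ hy0]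
      have h1 : y ≤ 1 / M * x := not_lt.1 hc
      calc M * y ≤ M * (1 / M * x) := mul_le_mul_of_nonneg_left h1 hM.le
        _ = x := by field_simp
  -- the tail of `X` vanishes at infinity
  have hT : Tendsto (fun t => μ.real (Ioi t)) atTop (nhds 0) := by
    have h1 := tendsto_cdf_atTop μ
    have h2 : Tendsto (fun t => 1 - cdf μ t) atTop (nhds (1 - 1)) := h1.const_sub 1
    rw [sub_self] at h2
    refine h2.congr fun t => ?_
    rw [cdf_eq_real, cX]; ring
  refine IsEquivalent.symm ?_
  unfold IsEquivalent
  rw [isLittleO_iff]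
  intro c hc
  have hcp : 0 < c / 2 * p := by positivity
  obtain ⟨M, hM1, hM0⟩ :=
    ((hT.eventually (gt_mem_nhds hcp)).and (eventually_gt_atTop (0 : ℝ))).exists
  have hA := isLittleO_iff.1 (hA2 (1 / M) (by positivity)) (show (0 : ℝ) < c / 2 by positivity)
  filter_upwards [hA, eventually_gt_atTop (0 : ℝ)] with x hxA hx
  have hH0 : 0 ≤ rvTail (fun ω => X ω * Y ω) x := ENNReal.toReal_nonneg
  rw [tY, Real.norm_of_nonneg measureReal_nonneg, Real.norm_of_nonneg hH0] at hxA
  rw [Pi.sub_apply, Real.norm_of_nonneg hH0, Real.norm_eq_abs, hI x]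
  have hd := hdiff x M hx hM0
  have hl := hlow x hx
  have hJ : 0 ≤ ∫ y, μ.real (Ioi (x / y)) ∂ν₀ := integral_nonneg fun y => T0 _
  have h1 : μ.real (Ioi M) * (∫ y, μ.real (Ioi (x / y)) ∂ν₀) ≤
      c / 2 * p * (∫ y, μ.real (Ioi (x / y)) ∂ν₀) := mul_le_mul_of_nonneg_right hM1.le hJ
  have h2 : c / 2 * (p * (∫ y, μ.real (Ioi (x / y)) ∂ν₀)) ≤
      c / 2 * rvTail (fun ω => X ω * Y ω) x := mul_le_mul_of_nonneg_left hl (by positivity)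
  linarith
end
end
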